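/- Let Var_n^sep denote variance with respect to the uniform probability measure on SEP(n). Then lim_{n→∞} Var_n^sep(A_n^{+,−})/n = (16 − 11√2)/2, and the same limit holds for Var_n^sep(A_n^{−,+}). -/

import Mathlib

open Finset Filter Real
open scoped Classical

/-- `σ` contains the pattern `τ` (a permutation of `Fin k` given as a function). -/
def ContainsPattern {n k : ℕ} (σ : Equiv.Perm (Fin n)) (τ : Fin k → Fin k) : Prop :=
  ∃ f : Fin k → Fin n, StrictMono f ∧ ∀ a b : Fin k, τ a < τ b ↔ σ (f a) < σ (f b)

/-- A permutation is separable iff it avoids the patterns 2413 and 3142. -/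
def Separable {n : ℕ} (σ : Equiv.Perm (Fin n)) : Prop :=
  ¬ ContainsPattern σ (![1, 3, 0, 2] : Fin 4 → Fin 4) ∧
  ¬ ContainsPattern σ (![2, 0, 3, 1] : Fin 4 → Fin 4)

/-- The set of separable permutations of `[n]`. -/
noncomputable def SEP (n : ℕ) : Finset (Equiv.Perm (Fin n)) :=
  Finset.univ.filter fun σ => Separable σ

/-- `IsAltSeq σ s l` : `l` is a strictly increasing list of indices along which the values of `σ`
alternate, starting with an ascent if `s = true` and starting with a descent if `s = false`. -/
def IsAltSeq {n : ℕ} (σ : Equiv.Perm (Fin n)) (s : Bool) (l : List (Fin n)) : Prop :=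
  l.Chain' (· < ·) ∧
  ∀ j : ℕ, ∀ hj : j + 1 < l.length,
    if decide (j % 2 = 0) = s then
      σ (l.get ⟨j, Nat.lt_of_succ_lt hj⟩) < σ (l.get ⟨j + 1, hj⟩)
    else
      σ (l.get ⟨j + 1, hj⟩) < σ (l.get ⟨j, Nat.lt_of_succ_lt hj⟩)

/-- The length of the longest alternating subsequence of `σ` of type `(s, e)`, where
`true` stands for ascent and `false` for descent.  An alternating subsequence starting with
an ascent ends with a descent iff its length is odd (and similarly in the other cases), so the
type is encoded by the parity constraint; a singleton counts as a subsequence of types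
`(+,-)` and `(-,+)` but not of types `(+,+)` and `(-,-)`. -/
noncomputable def altTypeLen {n : ℕ} (σ : Equiv.Perm (Fin n)) (s e : Bool) : ℕ :=
  sSup {k | ∃ l : List (Fin n), IsAltSeq σ s l ∧ l.length = k ∧
    k % 2 = (if s = e then 0 else 1)}

/-- The length `Aₙ(σ)` of the longest alternating subsequence of `σ`. -/
noncomputable def altLen {n : ℕ} (σ : Equiv.Perm (Fin n)) : ℕ :=
  sSup {k | ∃ l : List (Fin n), (IsAltSeq σ true l ∨ IsAltSeq σ false l) ∧
    l.length = k ∧ 1 ≤ k}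

/-- Expectation with respect to the uniform probability measure on `SEP n`. -/
noncomputable def sepExp (n : ℕ) (f : Equiv.Perm (Fin n) → ℝ) : ℝ :=
  (∑ σ ∈ SEP n, f σ) / (SEP n).card

/-- Variance with respect to the uniform probability measure on `SEP n`. -/
noncomputable def sepVar (n : ℕ) (f : Equiv.Perm (Fin n) → ℝ) : ℝ :=
  sepExp n (fun σ => (f σ - sepExp n f) ^ 2)

/-- `B₁^{+,n}(σ)`: the length of the first indecomposable block (0-indexed positions). -/
noncomputable def Bplus {n : ℕ} (σ : Equiv.Perm (Fin n)) : ℕ :=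
  sInf {j | 1 ≤ j ∧ ∀ i : Fin n, (i : ℕ) < j → (σ i : ℕ) < j}

/-- `B₁^{-,n}(σ)`: the length of the first skew indecomposable block (0-indexed positions). -/
noncomputable def Bminus {n : ℕ} (σ : Equiv.Perm (Fin n)) : ℕ :=
  sInf {j | 1 ≤ j ∧ ∀ i : Fin n, (i : ℕ) < j → n - j ≤ (σ i : ℕ)}

/-- Expectation over indecomposable separable permutations of `[n]`, i.e. the conditional
expectation under the uniform measure on `SEP n` given `{B₁^{+,n} = n}`. -/
noncomputable def indecExp (n : ℕ) (f : Equiv.Perm (Fin n) → ℝ) : ℝ :=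
  (∑ σ ∈ (SEP n).filter (fun σ => Bplus σ = n), f σ) /
    ((SEP n).filter (fun σ => Bplus σ = n)).card

/-- Neither 2413 nor 3142 occurs among the first `n` values of `g`. -/
def AvoidsSep {α : Type*} [Preorder α] (g : ℕ → α) (n : ℕ) : Prop :=
  ∀ i j k l, i < j → j < k → k < l → l < n →
    ¬ (g k < g i ∧ g i < g l ∧ g l < g j) ∧ ¬ (g j < g l ∧ g l < g i ∧ g i < g k)

/-- The first `j` values of `g` lie below the following ones, up to position `n`. -/
def SplitsAt {α : Type*} [Preorder α] (g : ℕ → α) (n j : ℕ) : Prop :=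
  ∀ i i', i < j → j ≤ i' → i' < n → g i < g i'

lemma AvoidsSep.neg {g : ℕ → ℤ} {n : ℕ} (h : AvoidsSep g n) : AvoidsSep (fun i => -g i) n := by
  intro i j k l hij hjk hkl hl
  obtain ⟨h₁, h₂⟩ := h i j k l hij hjk hkl hl
  simp only [neg_lt_neg_iff]
  exact ⟨fun h => h₂ ⟨h.2.2, h.2.1, h.1⟩, fun h => h₁ ⟨h.2.2, h.2.1, h.1⟩⟩

lemma exists_split_succ {g : ℕ → ℤ} {n j : ℕ} (hav : AvoidsSep g (n + 1))
    (hinj : ∀ i i', i < n + 1 → i' < n + 1 → g i = g i' → i = i')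
    (hj : 0 < j) (hjn : j < n) (hs : SplitsAt g n j) :
    ∃ j, 0 < j ∧ j < n + 1 ∧
      (SplitsAt g (n + 1) j ∨ SplitsAt (fun i => -g i) (n + 1) j) := by
  have hex : ∃ j, 0 < j ∧ j < n ∧ SplitsAt g n j := ⟨j, hj, hjn, hs⟩
  obtain ⟨hj, hjn, hs⟩ := Nat.find_spec hex
  have hmin : ∀ m, m < Nat.find hex → ¬ (0 < m ∧ m < n ∧ SplitsAt g n m) :=
    fun m hm => Nat.find_min hex hm
  set j := Nat.find hex
  by_cases hall : ∀ i < j, g i < g n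
  · refine ⟨j, hj, by omega, Or.inl ?_⟩
    intro i i' hi hi' hn
    rcases Nat.lt_succ_iff_lt_or_eq.mp hn with h | h
    · exact hs i i' hi hi' h
    · rw [h]; exact hall i hi
  by_cases hbel : ∀ i < n, g n < g i
  · refine ⟨n, by omega, by omega, Or.inr ?_⟩
    intro i i' hi hi' hn
    obtain rfl : i' = n := by omega
    simpa using hbel i hi
  exfalso
  push Not at hall hbel
  have hne : ∀ i < n, g i ≠ g n := fun i hi h => by
    have := hinj i n (by omega) (by omega) h
    omega
  have hex₀ : ∃ i, i < j ∧ g n < g i := by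
    obtain ⟨i, hi, h⟩ := hall
    exact ⟨i, hi, lt_of_le_of_ne h (hne i (by omega)).symm⟩
  obtain ⟨hcj, hc⟩ := Nat.find_spec hex₀
  have hcmin : ∀ m, m < Nat.find hex₀ → ¬ (m < j ∧ g n < g m) :=
    fun m hm => Nat.find_min hex₀ hm
  set c := Nat.find hex₀
  obtain ⟨b, hbn, hb⟩ := hbel
  have hb : g b < g n := lt_of_le_of_ne hb (hne b hbn)
  have hbj : b < j := by
    by_contra h
    have := hs c b hcj (by omega) hbn
    omega
  have habove : ∀ i, c ≤ i → i < j → g n < g i := by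
    intro i hci hij
    by_contra h
    have hlt : g i < g n := lt_of_le_of_ne (not_lt.mp h) (hne i (by omega))
    have hci' : c < i := lt_of_le_of_ne hci (fun h => by rw [← h] at hlt; omega)
    exact (hav c i j n hci' hij hjn (by omega)).2
      ⟨hlt, hc, hs c j hcj le_rfl hjn⟩
  have hbc : b < c := by
    by_contra h
    have := habove b (by omega) hbj
    omega
  refine hmin c hcj ⟨by omega, by omega, ?_⟩
  intro i i' hi hi' hn
  have h₁ : g i < g n := by
    have := hcmin i hi
    have := hne i (by omega)
    by_contra h
    exact hcmin i hi ⟨by omega, by omega⟩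
  by_cases h : i' < j
  · exact h₁.trans (habove i' hi' h)
  · exact hs i i' (by omega) (by omega) hn

lemma exists_split {g : ℕ → ℤ} {n : ℕ} (hn : 2 ≤ n) (hav : AvoidsSep g n)
    (hinj : ∀ i i', i < n → i' < n → g i = g i' → i = i') :
    ∃ j, 0 < j ∧ j < n ∧ (SplitsAt g n j ∨ SplitsAt (fun i => -g i) n j) := by
  induction n, hn using Nat.le_induction with
  | base =>
    refine ⟨1, by omega, by omega, ?_⟩
    have h01 : g 0 ≠ g 1 := fun h => by simpa using hinj 0 1 (by omega) (by omega) h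
    rcases lt_or_gt_of_ne h01 with h | h
    · refine Or.inl fun i i' hi hi' hn => ?_
      obtain rfl : i = 0 := by omega
      obtain rfl : i' = 1 := by omega
      exact h
    · refine Or.inr fun i i' hi hi' hn => ?_
      obtain rfl : i = 0 := by omega
      obtain rfl : i' = 1 := by omega
      simpa using h
  | succ n hn ih =>
    obtain ⟨j, hj, hjn, h | h⟩ := ih
      (fun i j k l hij hjk hkl hl => hav i j k l hij hjk hkl (by omega))
      (fun i i' hi hi' => hinj i i' (by omega) (by omega))
    · exact exists_split_succ hav hinj hj hjn h
    · obtain ⟨j, hj, hjn, h⟩ := exists_split_succ (g := fun i => -g i) hav.neg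
        (fun i i' hi hi' h => hinj i i' hi hi' (neg_injective h)) hj hjn h
      refine ⟨j, hj, hjn, h.symm.imp_left fun h => ?_⟩
      simpa using h

/-- The value of `σ` at position `i`, with the junk value `0` out of range. -/
def permVal {n : ℕ} (σ : Equiv.Perm (Fin n)) (i : ℕ) : ℕ :=
  if h : i < n then σ ⟨i, h⟩ else 0

lemma permVal_of_lt {n : ℕ} (σ : Equiv.Perm (Fin n)) {i : ℕ} (h : i < n) :
    permVal σ i = σ ⟨i, h⟩ := dif_pos h

@[simp] lemma permVal_coe {n : ℕ} (σ : Equiv.Perm (Fin n)) (i : Fin n) :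
    permVal σ i = σ i := permVal_of_lt σ i.2

lemma permVal_lt {n : ℕ} (σ : Equiv.Perm (Fin n)) {i : ℕ} (h : i < n) : permVal σ i < n := by
  rw [permVal_of_lt σ h]; exact Fin.is_lt _

lemma permVal_inj {n : ℕ} (σ : Equiv.Perm (Fin n)) {i j : ℕ} (hi : i < n) (hj : j < n)
    (h : permVal σ i = permVal σ j) : i = j := by
  rw [permVal_of_lt σ hi, permVal_of_lt σ hj] at h
  simpa using σ.injective (Fin.ext h)

lemma containsPattern_iff {n : ℕ} (σ : Equiv.Perm (Fin n)) (τ : Fin 4 → Fin 4) :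
    ContainsPattern σ τ ↔ ∃ i j k l : ℕ, i < j ∧ j < k ∧ k < l ∧ l < n ∧
      ∀ a b : Fin 4, τ a < τ b ↔
        permVal σ ((![i, j, k, l] : Fin 4 → ℕ) a) < permVal σ ((![i, j, k, l] : Fin 4 → ℕ) b) := by
  constructor
  · rintro ⟨f, hf, h⟩
    refine ⟨f 0, f 1, f 2, f 3, hf (by decide), hf (by decide), hf (by decide), (f 3).2, ?_⟩
    have key : ∀ a : Fin 4, permVal σ ((![f 0, f 1, f 2, f 3] : Fin 4 → ℕ) a) = σ (f a) := by
      intro a; fin_cases a <;> exact permVal_coe σ _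
    intro a b
    rw [key, key, h, Fin.lt_def]
  · rintro ⟨i, j, k, l, hij, hjk, hkl, hl, h⟩
    refine ⟨![⟨i, by omega⟩, ⟨j, by omega⟩, ⟨k, by omega⟩, ⟨l, hl⟩], ?_, ?_⟩
    · rw [Fin.strictMono_iff_lt_succ]
      intro a; fin_cases a <;> simpa
    · intro a b
      rw [h, Fin.lt_def, ← permVal_coe, ← permVal_coe]
      fin_cases a <;> fin_cases b <;> rfl

lemma separable_iff {n : ℕ} (σ : Equiv.Perm (Fin n)) :
    Separable σ ↔ AvoidsSep (permVal σ) n := by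
  have h₁ : ContainsPattern σ (![1, 3, 0, 2] : Fin 4 → Fin 4) ↔
      ∃ i j k l : ℕ, i < j ∧ j < k ∧ k < l ∧ l < n ∧
        (permVal σ k < permVal σ i ∧ permVal σ i < permVal σ l ∧ permVal σ l < permVal σ j) := by
    rw [containsPattern_iff]
    refine exists_congr fun i => exists_congr fun j => exists_congr fun k => exists_congr fun l =>
      and_congr_right fun _ => and_congr_right fun _ => and_congr_right fun _ =>
      and_congr_right fun _ => ?_
    constructor
    · intro h
      exact ⟨(h 2 0).1 (by decide), (h 0 3).1 (by decide), (h 3 1).1 (by decide)⟩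
    · rintro ⟨h₁, h₂, h₃⟩ a b
      fin_cases a <;> fin_cases b <;> simp <;> omega
  have h₂ : ContainsPattern σ (![2, 0, 3, 1] : Fin 4 → Fin 4) ↔
      ∃ i j k l : ℕ, i < j ∧ j < k ∧ k < l ∧ l < n ∧
        (permVal σ j < permVal σ l ∧ permVal σ l < permVal σ i ∧ permVal σ i < permVal σ k) := by
    rw [containsPattern_iff]
    refine exists_congr fun i => exists_congr fun j => exists_congr fun k => exists_congr fun l =>
      and_congr_right fun _ => and_congr_right fun _ => and_congr_right fun _ =>
      and_congr_right fun _ => ?_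
    constructor
    · intro h
      exact ⟨(h 1 3).1 (by decide), (h 3 0).1 (by decide), (h 0 2).1 (by decide)⟩
    · rintro ⟨h₁, h₂, h₃⟩ a b
      fin_cases a <;> fin_cases b <;> simp <;> omega
  rw [Separable, h₁, h₂, AvoidsSep]
  push Not
  constructor
  · rintro ⟨h, h'⟩ i j k l hij hjk hkl hl
    exact ⟨h i j k l hij hjk hkl hl, h' i j k l hij hjk hkl hl⟩
  · intro h
    exact ⟨fun i j k l hij hjk hkl hl => (h i j k l hij hjk hkl hl).1,
      fun i j k l hij hjk hkl hl => (h i j k l hij hjk hkl hl).2⟩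

lemma mem_SEP {n : ℕ} {σ : Equiv.Perm (Fin n)} : σ ∈ SEP n ↔ AvoidsSep (permVal σ) n := by
  simp [SEP, separable_iff]

/-- The reversal of a permutation. -/
def permRev {n : ℕ} (σ : Equiv.Perm (Fin n)) : Equiv.Perm (Fin n) := Fin.revPerm.trans σ

/-- The complement of a permutation. -/
def permCompl {n : ℕ} (σ : Equiv.Perm (Fin n)) : Equiv.Perm (Fin n) := σ.trans Fin.revPerm

lemma permRev_permRev {n : ℕ} (σ : Equiv.Perm (Fin n)) : permRev (permRev σ) = σ := by
  ext i; simp [permRev]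

lemma permCompl_permCompl {n : ℕ} (σ : Equiv.Perm (Fin n)) : permCompl (permCompl σ) = σ := by
  ext i; simp [permCompl]

lemma permVal_permRev {n : ℕ} (σ : Equiv.Perm (Fin n)) {i : ℕ} (h : i < n) :
    permVal (permRev σ) i = permVal σ (n - 1 - i) := by
  rw [permVal_of_lt _ h, permVal_of_lt _ (by omega)]
  simp only [permRev, Equiv.trans_apply, Fin.revPerm_apply]
  congr 2
  ext; simp [Fin.val_rev]; omega

lemma permVal_permCompl {n : ℕ} (σ : Equiv.Perm (Fin n)) {i : ℕ} (h : i < n) :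
    permVal (permCompl σ) i = n - 1 - permVal σ i := by
  rw [permVal_of_lt _ h, permVal_of_lt _ h]
  simp [permCompl, Fin.val_rev]; omega

lemma permRev_mem_SEP {n : ℕ} {σ : Equiv.Perm (Fin n)} (h : σ ∈ SEP n) : permRev σ ∈ SEP n := by
  rw [mem_SEP] at h ⊢
  intro i j k l hij hjk hkl hl
  rw [permVal_permRev σ (by omega : i < n), permVal_permRev σ (by omega : j < n),
    permVal_permRev σ (by omega : k < n), permVal_permRev σ (by omega : l < n)]
  have := h (n - 1 - l) (n - 1 - k) (n - 1 - j) (n - 1 - i) (by omega) (by omega) (by omega)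
    (by omega)
  omega

lemma permCompl_mem_SEP {n : ℕ} {σ : Equiv.Perm (Fin n)} (h : σ ∈ SEP n) :
    permCompl σ ∈ SEP n := by
  rw [mem_SEP] at h ⊢
  intro i j k l hij hjk hkl hl
  have hi := permVal_lt σ (by omega : i < n)
  have hj := permVal_lt σ (by omega : j < n)
  have hk := permVal_lt σ (by omega : k < n)
  have hl' := permVal_lt σ hl
  rw [permVal_permCompl σ (by omega : i < n), permVal_permCompl σ (by omega : j < n),
    permVal_permCompl σ (by omega : k < n), permVal_permCompl σ (by omega : l < n)]
  have := h i j k l (by omega) (by omega) (by omega) (by omega)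
  omega

/-- `σ` is a direct sum of two nonempty permutations. -/
def SumDec {n : ℕ} (σ : Equiv.Perm (Fin n)) : Prop :=
  ∃ j, 0 < j ∧ j < n ∧ SplitsAt (permVal σ) n j

lemma sumDec_permRev_iff {n : ℕ} (hn : 2 ≤ n) {σ : Equiv.Perm (Fin n)} (h : σ ∈ SEP n) :
    SumDec (permRev σ) ↔ ¬ SumDec σ := by
  rw [mem_SEP] at h
  constructor
  · rintro ⟨j, hj, hjn, hs⟩ ⟨k, hk, hkn, hs'⟩
    have h₁ := hs' 0 (n - 1) hk (by omega) (by omega)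
    have h₂ := hs 0 (n - 1) hj (by omega) (by omega)
    rw [permVal_permRev σ (by omega), permVal_permRev σ (by omega)] at h₂
    simp only [Nat.sub_zero, Nat.sub_self] at h₂
    omega
  · intro hd
    obtain ⟨j, hj, hjn, hs | hs⟩ := exists_split (g := fun i => (permVal σ i : ℤ)) hn
      (by simpa [AvoidsSep] using h)
      (fun i i' hi hi' hii => permVal_inj σ hi hi' (by exact_mod_cast hii))
    · exact absurd ⟨j, hj, hjn, by simpa [SplitsAt] using hs⟩ hd
    · refine ⟨n - j, by omega, by omega, ?_⟩
      intro i i' hi hi' hn'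
      rw [permVal_permRev σ (by omega), permVal_permRev σ (by omega)]
      have := hs (n - 1 - i') (n - 1 - i) (by omega) (by omega) (by omega)
      simp only [neg_lt_neg_iff, Nat.cast_lt] at this
      exact this

/-- The direct sum of two permutations. -/
def permSum {k m : ℕ} (p : Equiv.Perm (Fin k) × Equiv.Perm (Fin m)) :
    Equiv.Perm (Fin (k + m)) :=
  finSumFinEquiv.permCongr (Equiv.Perm.sumCongr p.1 p.2)

lemma permVal_permSum_left {k m : ℕ} (p : Equiv.Perm (Fin k) × Equiv.Perm (Fin m)) {i : ℕ}
    (hi : i < k) : permVal (permSum p) i = permVal p.1 i := by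
  rw [permVal_of_lt _ (by omega : i < k + m), permVal_of_lt _ hi]
  have : (⟨i, by omega⟩ : Fin (k + m)) = Fin.castAdd m ⟨i, hi⟩ := rfl
  rw [this]
  simp only [permSum, Equiv.permCongr_apply, finSumFinEquiv_symm_apply_castAdd,
    Equiv.Perm.sumCongr_apply, Sum.map_inl, finSumFinEquiv_apply_left, Fin.val_castAdd]

lemma permVal_permSum_right {k m : ℕ} (p : Equiv.Perm (Fin k) × Equiv.Perm (Fin m)) {i : ℕ}
    (hi : i < m) : permVal (permSum p) (k + i) = k + permVal p.2 i := by
  rw [permVal_of_lt _ (by omega : k + i < k + m), permVal_of_lt _ hi]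
  have : (⟨k + i, by omega⟩ : Fin (k + m)) = Fin.natAdd k ⟨i, hi⟩ := rfl
  rw [this]
  simp only [permSum, Equiv.permCongr_apply, finSumFinEquiv_symm_apply_natAdd,
    Equiv.Perm.sumCongr_apply, Sum.map_inr, finSumFinEquiv_apply_right, Fin.val_natAdd]

lemma permVal_permSum_right' {k m : ℕ} (p : Equiv.Perm (Fin k) × Equiv.Perm (Fin m)) {i : ℕ}
    (hk : k ≤ i) (hi : i < k + m) : permVal (permSum p) i = k + permVal p.2 (i - k) := by
  obtain ⟨i, rfl⟩ := Nat.exists_eq_add_of_le hk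
  rw [permVal_permSum_right p (by omega)]
  simp

lemma permSum_injective {k m : ℕ} :
    Function.Injective (permSum : Equiv.Perm (Fin k) × Equiv.Perm (Fin m) → _) := by
  intro p q h
  have h' := (finSumFinEquiv.permCongr).injective h
  have := Equiv.Perm.sumCongrHom_injective (a₁ := p) (a₂ := q) h'
  exact this

lemma permVal_lt_of_splitsAt {n j : ℕ} (hj : j ≤ n) {σ : Equiv.Perm (Fin n)}
    (hs : SplitsAt (permVal σ) n j) {i : ℕ} (hi : i < j) : permVal σ i < j := by
  by_contra hcon
  have hsub : (Finset.Ico j n).image (permVal σ) ⊆ Finset.Ico (j + 1) n := by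
    intro v hv
    simp only [Finset.mem_image, Finset.mem_Ico] at hv ⊢
    obtain ⟨i', ⟨h₁, h₂⟩, rfl⟩ := hv
    have := hs i i' hi h₁ h₂
    exact ⟨by omega, permVal_lt σ h₂⟩
  have hcard := Finset.card_le_card hsub
  rw [Finset.card_image_of_injOn, Nat.card_Ico, Nat.card_Ico] at hcard
  · have := permVal_lt σ (by omega : i < n)
    omega
  · intro a ha b hb hab
    simp only [Finset.coe_Ico, Set.mem_Ico] at ha hb
    exact permVal_inj σ ha.2 hb.2 hab

lemma exists_permSum_of_splitsAt {k m : ℕ} {σ : Equiv.Perm (Fin (k + m))}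
    (hs : SplitsAt (permVal σ) (k + m) k) : ∃ p, permSum p = σ := by
  have hmaps : Set.MapsTo (finSumFinEquiv.symm.permCongr σ)
      (Set.range (Sum.inl : Fin k → Fin k ⊕ Fin m)) (Set.range Sum.inl) := by
    rintro _ ⟨i, rfl⟩
    have hlt : (σ (Fin.castAdd m i) : ℕ) < k := by
      have := permVal_lt_of_splitsAt (by omega) hs i.2
      rw [permVal_of_lt _ (by omega)] at this
      exact this
    refine ⟨⟨σ (Fin.castAdd m i), hlt⟩, ?_⟩
    rw [← finSumFinEquiv.injective.eq_iff]
    ext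
    simp [Equiv.permCongr_apply]
  obtain ⟨p, hp⟩ := Equiv.Perm.mem_sumCongrHom_range_of_perm_mapsTo_inl hmaps
  refine ⟨p, ?_⟩
  have : Equiv.Perm.sumCongr p.1 p.2 = finSumFinEquiv.symm.permCongr σ := hp
  ext i
  simp [permSum, this, Equiv.permCongr_apply]

lemma splitsAt_permSum {k m : ℕ} (p : Equiv.Perm (Fin k) × Equiv.Perm (Fin m)) :
    SplitsAt (permVal (permSum p)) (k + m) k := by
  intro i i' hi hi' hn
  rw [permVal_permSum_left p hi, permVal_permSum_right' p hi' hn]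
  have := permVal_lt p.1 hi
  omega

lemma splitsAt_permSum_iff {k m j : ℕ} (hj : j < k)
    (p : Equiv.Perm (Fin k) × Equiv.Perm (Fin m)) :
    SplitsAt (permVal (permSum p)) (k + m) j ↔ SplitsAt (permVal p.1) k j := by
  constructor
  · intro h i i' hi hi' hn
    have := h i i' hi hi' (by omega)
    rwa [permVal_permSum_left p (by omega), permVal_permSum_left p (by omega)] at this
  · intro h i i' hi hi' hn
    rw [permVal_permSum_left p (by omega)]
    by_cases hk : i' < k
    · rw [permVal_permSum_left p hk]
      exact h i i' hi hi' hk
    · rw [permVal_permSum_right' p (by omega) hn]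
      have := permVal_lt p.1 (by omega : i < k)
      omega

lemma permSum_mem_SEP_iff {k m : ℕ} (p : Equiv.Perm (Fin k) × Equiv.Perm (Fin m)) :
    permSum p ∈ SEP (k + m) ↔ p.1 ∈ SEP k ∧ p.2 ∈ SEP m := by
  simp only [mem_SEP]
  constructor
  · intro h
    constructor
    · intro i j a b hij hja hab hb
      have := h i j a b hij hja hab (by omega)
      rwa [permVal_permSum_left p (by omega), permVal_permSum_left p (by omega),
        permVal_permSum_left p (by omega), permVal_permSum_left p (by omega)] at this
    · intro i j a b hij hja hab hb
      have := h (k + i) (k + j) (k + a) (k + b) (by omega) (by omega) (by omega) (by omega)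
      rw [permVal_permSum_right p (by omega), permVal_permSum_right p (by omega),
        permVal_permSum_right p (by omega), permVal_permSum_right p (by omega)] at this
      omega
  · rintro ⟨h₁, h₂⟩ i j a b hij hja hab hb
    by_cases hbk : b < k
    · rw [permVal_permSum_left p (by omega), permVal_permSum_left p (by omega),
        permVal_permSum_left p (by omega), permVal_permSum_left p (by omega)]
      exact h₁ i j a b hij hja hab hbk
    by_cases hik : k ≤ i
    · have := h₂ (i - k) (j - k) (a - k) (b - k) (by omega) (by omega) (by omega) (by omega)
      rw [permVal_permSum_right' p (by omega) (by omega),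
        permVal_permSum_right' p (by omega) (by omega),
        permVal_permSum_right' p (by omega) (by omega),
        permVal_permSum_right' p (by omega) (by omega)]
      omega
    have hs := splitsAt_permSum p
    have hib := hs i b (by omega) (by omega) (by omega)
    have hij' : k ≤ j → permVal (permSum p) i < permVal (permSum p) j :=
      fun h => hs i j (by omega) h (by omega)
    have hia' : k ≤ a → permVal (permSum p) i < permVal (permSum p) a :=
      fun h => hs i a (by omega) h (by omega)
    have hjb' : j < k → permVal (permSum p) j < permVal (permSum p) b :=
      fun h => hs j b h (by omega) (by omega)
    have hja' : j < k → k ≤ a → permVal (permSum p) j < permVal (permSum p) a :=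
      fun h h' => hs j a h h' (by omega)
    omega

/-- `c` is the position of an interior local maximum of the first `n` values of `g`. -/
def IsPeak {α : Type*} [Preorder α] (g : ℕ → α) (n c : ℕ) : Prop :=
  0 < c ∧ c + 1 < n ∧ g (c - 1) < g c ∧ g (c + 1) < g c

/-- The number of interior local maxima of `σ`. -/
noncomputable def peaks {n : ℕ} (σ : Equiv.Perm (Fin n)) : ℕ :=
  #{c ∈ range n | IsPeak (permVal σ) n c}

/-- Whether `σ` begins with an ascent, or has at most one entry. -/
noncomputable def startsUp {n : ℕ} (σ : Equiv.Perm (Fin n)) : Bool :=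
  decide (¬ (1 < n ∧ permVal σ 1 < permVal σ 0))

/-- Whether `σ` ends with an ascent, or has at most one entry. -/
noncomputable def endsUp {n : ℕ} (σ : Equiv.Perm (Fin n)) : Bool :=
  decide (¬ (1 < n ∧ permVal σ (n - 1) < permVal σ (n - 2)))

lemma startsUp_permRev {n : ℕ} (hn : 2 ≤ n) (σ : Equiv.Perm (Fin n)) :
    startsUp (permRev σ) = !endsUp σ := by
  have hne : permVal σ (n - 1) ≠ permVal σ (n - 2) := fun h => by
    have := permVal_inj σ (by omega) (by omega) h
    omega
  rw [startsUp, endsUp, permVal_permRev σ (by omega), permVal_permRev σ (by omega),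
    ← decide_not, Nat.sub_zero, Nat.sub_sub]
  congr 1
  rw [eq_iff_iff, show n - (1 + 1) = n - 2 by omega]
  omega

lemma endsUp_permRev {n : ℕ} (hn : 2 ≤ n) (σ : Equiv.Perm (Fin n)) :
    endsUp (permRev σ) = !startsUp σ := by
  have := startsUp_permRev hn (permRev σ)
  rw [permRev_permRev] at this
  simp [this]

lemma peaks_permRev_le {n : ℕ} (σ : Equiv.Perm (Fin n)) : peaks σ ≤ peaks (permRev σ) := by
  refine Finset.card_le_card_of_injOn (fun c => n - 1 - c) ?_ ?_
  · intro c hc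
    rw [Finset.mem_coe, Finset.mem_filter, Finset.mem_range] at hc ⊢
    unfold IsPeak at hc ⊢
    obtain ⟨hcn, h0, h1, h2, h3⟩ := hc
    dsimp only
    rw [permVal_permRev σ (by omega), permVal_permRev σ (by omega), permVal_permRev σ (by omega)]
    rw [show n - 1 - (n - 1 - c) = c by omega, show n - 1 - (n - 1 - c - 1) = c + 1 by omega,
      show n - 1 - (n - 1 - c + 1) = c - 1 by omega]
    exact ⟨by omega, by omega, by omega, h3, h2⟩
  · intro a ha b hb hab
    rw [Finset.mem_coe, Finset.mem_filter, Finset.mem_range] at ha hb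
    simp only at hab
    omega

lemma peaks_permRev {n : ℕ} (σ : Equiv.Perm (Fin n)) : peaks (permRev σ) = peaks σ := by
  refine le_antisymm ?_ (peaks_permRev_le σ)
  simpa [permRev_permRev] using peaks_permRev_le (permRev σ)

section DirectSum

variable {k m : ℕ} (p : Equiv.Perm (Fin k) × Equiv.Perm (Fin m))

lemma startsUp_permSum (hk : 0 < k) (hm : 0 < m) : startsUp (permSum p) = startsUp p.1 := by
  rw [startsUp, startsUp]
  congr 1
  rw [eq_iff_iff, not_iff_not, permVal_permSum_left p hk]
  have h0 := permVal_lt p.1 hk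
  by_cases h : 1 < k
  · rw [permVal_permSum_left p h]
    omega
  · rw [permVal_permSum_right' p (by omega) (by omega)]
    omega

lemma endsUp_permSum (hk : 0 < k) (hm : 0 < m) : endsUp (permSum p) = endsUp p.2 := by
  rw [endsUp, endsUp]
  congr 1
  rw [eq_iff_iff, not_iff_not, permVal_permSum_right' p (by omega) (by omega),
    show k + m - 1 - k = m - 1 by omega]
  by_cases h : 1 < m
  · rw [permVal_permSum_right' p (by omega) (by omega), show k + m - 2 - k = m - 2 by omega]
    omega
  · rw [permVal_permSum_left p (by omega)]
    have := permVal_lt p.1 (by omega : k + m - 2 < k)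
    omega

lemma peaks_permSum (hk : 0 < k) (hm : 0 < m) :
    peaks (permSum p) = peaks p.1 + peaks p.2 + if startsUp p.2 then 0 else 1 := by
  have hleft : ∀ c < k, (IsPeak (permVal (permSum p)) (k + m) c ↔ IsPeak (permVal p.1) k c) := by
    intro c hc
    unfold IsPeak
    rw [permVal_permSum_left p hc, permVal_permSum_left p (by omega : c - 1 < k)]
    by_cases h : c + 1 < k
    · rw [permVal_permSum_left p h]
      omega
    · rw [permVal_permSum_right' p (by omega) (by omega)]
      have := permVal_lt p.1 hc
      omega
  have hright : ∀ c < m, ((IsPeak (permVal (permSum p)) (k + m) (k + c)) ↔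
      (IsPeak (permVal p.2) m c ∨ (c = 0 ∧ startsUp p.2 = false))) := by
    intro c hc
    unfold IsPeak startsUp
    rw [permVal_permSum_right p hc]
    simp only [decide_eq_false_iff_not, not_not]
    by_cases h : c + 1 < m
    · rw [add_assoc, permVal_permSum_right p h]
      rcases Nat.eq_zero_or_pos c with rfl | h0
      · rw [permVal_permSum_left p (by omega)]
        have := permVal_lt p.1 (by omega : k + 0 - 1 < k)
        simp only [add_zero, zero_add, true_and] at h this ⊢
        omega
      · rw [permVal_permSum_right' p (by omega) (by omega),
          show k + c - 1 - k = c - 1 by omega]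
        omega
    · constructor
      · omega
      · rintro (h' | h')
        · omega
        · omega
  simp only [peaks, Finset.card_filter]
  rw [Finset.sum_range_add, add_assoc]
  congr 1
  · exact Finset.sum_congr rfl fun c hc => by simp only [hleft c (Finset.mem_range.mp hc)]
  · have : (if startsUp p.2 then 0 else 1) =
        ∑ c ∈ range m, if c = 0 ∧ startsUp p.2 = false then 1 else 0 := by
      rw [Finset.sum_eq_single 0 (by intro b _ hb; simp [hb]) (by simp; omega)]
      cases startsUp p.2 <;> simp
    rw [this, ← Finset.sum_add_distrib]
    refine Finset.sum_congr rfl fun c hc => ?_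
    simp only [hright c (Finset.mem_range.mp hc)]
    by_cases h0 : c = 0
    · have : ¬ IsPeak (permVal p.2) m c := by rintro ⟨h, _⟩; omega
      simp [this]
    · simp [h0]

end DirectSum

section Weights

variable {R : Type*} [CommSemiring R] (t : R)

/-- Peak enumerator of the sum-indecomposable separable permutations of size `n ≥ 1`
with given first and last steps. -/
noncomputable def indSum (a b : Bool) (n : ℕ) : R :=
  if n = 0 then 0 else
    ∑ σ ∈ SEP n with ¬ SumDec σ ∧ startsUp σ = a ∧ endsUp σ = b, t ^ peaks σ

/-- Peak enumerator of the sum-decomposable separable permutations of size `n`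
with given first and last steps. -/
noncomputable def decSum (a b : Bool) (n : ℕ) : R :=
  ∑ σ ∈ SEP n with SumDec σ ∧ startsUp σ = a ∧ endsUp σ = b, t ^ peaks σ

/-- Peak enumerator of the sum-indecomposable separable permutations of size `n ≥ 1`
with given first step. -/
noncomputable def leftSum (a : Bool) (n : ℕ) : R :=
  if n = 0 then 0 else ∑ σ ∈ SEP n with ¬ SumDec σ ∧ startsUp σ = a, t ^ peaks σ

/-- Enumerator of the separable permutations of size `n ≥ 1` with given last step, by the number
of peaks after a smaller first entry is prepended. -/
noncomputable def rightSum (b : Bool) (n : ℕ) : R :=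
  if n = 0 then 0 else
    ∑ σ ∈ SEP n with endsUp σ = b, t ^ (peaks σ + if startsUp σ then 0 else 1)

/-- The first summand of `σ` as a direct sum has size `k < n`. -/
def FirstBlock {n : ℕ} (σ : Equiv.Perm (Fin n)) (k : ℕ) : Prop :=
  0 < k ∧ k < n ∧ SplitsAt (permVal σ) n k ∧ ∀ j, 0 < j → j < k → ¬ SplitsAt (permVal σ) n j

lemma firstBlock_permSum_iff {k m : ℕ} (hk : 0 < k) (hm : 0 < m)
    (p : Equiv.Perm (Fin k) × Equiv.Perm (Fin m)) :
    FirstBlock (permSum p) k ↔ ¬ SumDec p.1 := by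
  constructor
  · rintro ⟨-, -, -, h⟩ ⟨j, hj, hjk, hs⟩
    exact h j hj hjk ((splitsAt_permSum_iff hjk p).2 hs)
  · intro h
    exact ⟨hk, by omega, splitsAt_permSum p,
      fun j hj hjk hs => h ⟨j, hj, hjk, (splitsAt_permSum_iff hjk p).1 hs⟩⟩

lemma sum_firstBlock {k m : ℕ} (hk : 0 < k) (hm : 0 < m) (a b : Bool) :
    ∑ σ ∈ SEP (k + m) with FirstBlock σ k ∧ startsUp σ = a ∧ endsUp σ = b, t ^ peaks σ =
      leftSum t a k * rightSum t b m := by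
  rw [leftSum, rightSum, if_neg (by omega), if_neg (by omega), Finset.sum_mul_sum,
    ← Finset.sum_product']
  symm
  refine Finset.sum_nbij permSum ?_ permSum_injective.injOn ?_ ?_
  · intro p hp
    simp only [Finset.mem_product, Finset.mem_filter] at hp ⊢
    rw [permSum_mem_SEP_iff, firstBlock_permSum_iff hk hm, startsUp_permSum p hk hm,
      endsUp_permSum p hk hm]
    tauto
  · intro σ hσ
    rw [Finset.mem_coe, Finset.mem_filter] at hσ
    obtain ⟨hS, hF, ha, hb⟩ := hσ
    obtain ⟨p, rfl⟩ := exists_permSum_of_splitsAt hF.2.2.1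
    refine ⟨p, ?_, rfl⟩
    rw [permSum_mem_SEP_iff] at hS
    rw [firstBlock_permSum_iff hk hm] at hF
    rw [startsUp_permSum p hk hm] at ha
    rw [endsUp_permSum p hk hm] at hb
    simp only [Finset.mem_coe, Finset.mem_product, Finset.mem_filter]
    tauto
  · intro p _
    simp only [peaks_permSum p hk hm, pow_add, mul_assoc]

lemma sumDec_iff_exists_firstBlock {n : ℕ} (σ : Equiv.Perm (Fin n)) :
    SumDec σ ↔ ∃ k, FirstBlock σ k := by
  constructor
  · intro h
    obtain ⟨h₁, h₂, h₃⟩ := Nat.find_spec h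
    exact ⟨Nat.find h, h₁, h₂, h₃, fun j hj hlt hs => Nat.find_min h hlt ⟨hj, by omega, hs⟩⟩
  · rintro ⟨k, h₁, h₂, h₃, -⟩
    exact ⟨k, h₁, h₂, h₃⟩

lemma FirstBlock.unique {n k l : ℕ} {σ : Equiv.Perm (Fin n)} (hk : FirstBlock σ k)
    (hl : FirstBlock σ l) : k = l := by
  rcases lt_trichotomy k l with h | h | h
  · exact absurd hk.2.2.1 (hl.2.2.2 k hk.1 h)
  · exact h
  · exact absurd hl.2.2.1 (hk.2.2.2 l hl.1 h)

lemma decSum_eq (a b : Bool) (n : ℕ) :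
    decSum t a b n = ∑ p ∈ antidiagonal n, leftSum t a p.1 * rightSum t b p.2 := by
  rw [Finset.Nat.sum_antidiagonal_eq_sum_range_succ_mk, decSum]
  have hU : {σ ∈ SEP n | SumDec σ ∧ startsUp σ = a ∧ endsUp σ = b} =
      (range n.succ).biUnion
        fun k => {σ ∈ SEP n | FirstBlock σ k ∧ startsUp σ = a ∧ endsUp σ = b} := by
    ext σ
    simp only [Finset.mem_filter, Finset.mem_biUnion, Finset.mem_range,
      sumDec_iff_exists_firstBlock]
    constructor
    · rintro ⟨hS, ⟨k, hk⟩, h⟩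
      exact ⟨k, by have := hk.2.1; omega, hS, hk, h⟩
    · rintro ⟨k, -, hS, hk, h⟩
      exact ⟨hS, ⟨k, hk⟩, h⟩
  rw [hU, Finset.sum_biUnion]
  · refine Finset.sum_congr rfl fun k hk => ?_
    obtain ⟨m, rfl⟩ := Nat.exists_eq_add_of_le (Finset.mem_range_succ_iff.mp hk)
    simp only [add_tsub_cancel_left]
    rcases Nat.eq_zero_or_pos k with rfl | hk0
    · rw [Finset.filter_false_of_mem, Finset.sum_empty, leftSum, if_pos rfl, zero_mul]
      rintro σ - ⟨h, -⟩
      exact absurd h.1 (lt_irrefl 0)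
    rcases Nat.eq_zero_or_pos m with rfl | hm0
    · rw [Finset.filter_false_of_mem, Finset.sum_empty, rightSum, if_pos rfl, mul_zero]
      rintro σ - ⟨h, -⟩
      exact absurd h.2.1 (lt_irrefl k)
    exact sum_firstBlock t hk0 hm0 a b
  · intro k _ l _ hkl
    rw [Function.onFun, Finset.disjoint_left]
    intro σ hσ hσ'
    rw [Finset.mem_filter] at hσ hσ'
    exact hkl (hσ.2.1.unique hσ'.2.1)

lemma leftSum_eq (a : Bool) (n : ℕ) :
    leftSum t a n = indSum t a true n + indSum t a false n := by
  rw [leftSum, indSum, indSum]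
  split_ifs with h
  · simp
  · rw [← Finset.sum_filter_add_sum_filter_not _ (fun σ => endsUp σ = true),
      Finset.filter_filter, Finset.filter_filter]
    simp only [Bool.not_eq_true, and_assoc]

lemma sum_startsUp_endsUp (a b : Bool) {n : ℕ} (hn : n ≠ 0) :
    ∑ σ ∈ SEP n with startsUp σ = a ∧ endsUp σ = b, t ^ peaks σ =
      indSum t a b n + decSum t a b n := by
  rw [indSum, decSum, if_neg hn,
    ← Finset.sum_filter_add_sum_filter_not _ (fun σ => SumDec σ), add_comm,
    Finset.filter_filter, Finset.filter_filter]
  congr 2 <;> ext σ <;> simp only [Finset.mem_filter] <;> tauto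

lemma rightSum_eq (b : Bool) {n : ℕ} (hn : n ≠ 0) :
    rightSum t b n = (indSum t true b n + decSum t true b n) +
      t * (indSum t false b n + decSum t false b n) := by
  rw [rightSum, if_neg hn, ← sum_startsUp_endsUp t _ _ hn, ← sum_startsUp_endsUp t _ _ hn,
    ← Finset.sum_filter_add_sum_filter_not _ (fun σ => startsUp σ = true),
    Finset.filter_filter, Finset.filter_filter, Finset.mul_sum]
  congr 1
  · refine Finset.sum_congr (by ext σ; simp only [Finset.mem_filter]; tauto) fun σ hσ => ?_
    rw [Finset.mem_filter] at hσ
    simp [hσ.2.1]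
  · refine Finset.sum_congr ?_ fun σ hσ => ?_
    · ext σ; simp only [Finset.mem_filter, Bool.not_eq_true]; tauto
    rw [Finset.mem_filter] at hσ
    simp [hσ.2.1, pow_succ, mul_comm]

lemma sum_SEP_eq {n : ℕ} (hn : n ≠ 0) :
    ∑ σ ∈ SEP n, t ^ peaks σ =
      ((indSum t true true n + decSum t true true n) +
        (indSum t true false n + decSum t true false n)) +
      ((indSum t false true n + decSum t false true n) +
        (indSum t false false n + decSum t false false n)) := by
  simp only [← sum_startsUp_endsUp t _ _ hn]
  rw [← Finset.sum_filter_add_sum_filter_not _ (fun σ => startsUp σ = true)]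
  congr 1
  · rw [← Finset.sum_filter_add_sum_filter_not _ (fun σ => endsUp σ = true),
      Finset.filter_filter, Finset.filter_filter]
    simp only [Bool.not_eq_true]
  · rw [← Finset.sum_filter_add_sum_filter_not _ (fun σ => endsUp σ = true),
      Finset.filter_filter, Finset.filter_filter]
    simp only [Bool.not_eq_true]

lemma indSum_eq_decSum (a b : Bool) {n : ℕ} (hn : 2 ≤ n) :
    indSum t a b n = decSum t (!b) (!a) n := by
  rw [indSum, decSum, if_neg (by omega)]
  refine Finset.sum_nbij' permRev permRev ?_ ?_ (fun σ _ => permRev_permRev σ)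
    (fun σ _ => permRev_permRev σ) (fun σ _ => by rw [peaks_permRev])
  · intro σ hσ
    rw [Finset.mem_filter] at hσ ⊢
    obtain ⟨hS, hD, ha, hb⟩ := hσ
    rw [startsUp_permRev hn, endsUp_permRev hn, ha, hb]
    exact ⟨permRev_mem_SEP hS, (sumDec_permRev_iff hn hS).2 hD, rfl, rfl⟩
  · intro σ hσ
    rw [Finset.mem_filter] at hσ ⊢
    obtain ⟨hS, hD, ha, hb⟩ := hσ
    rw [startsUp_permRev hn, endsUp_permRev hn, ha, hb]
    refine ⟨permRev_mem_SEP hS, fun h => (sumDec_permRev_iff hn hS).1 h hD, by simp, by simp⟩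

lemma decSum_of_lt_two (a b : Bool) {n : ℕ} (hn : n < 2) : decSum t a b n = 0 := by
  rw [decSum, Finset.filter_false_of_mem, Finset.sum_empty]
  rintro σ - ⟨⟨j, hj, hjn, -⟩, -⟩
  omega

lemma indSum_one (a b : Bool) : indSum t a b 1 = if a = true ∧ b = true then 1 else 0 := by
  have hS : SEP 1 = {1} := by
    ext σ
    simp only [mem_SEP, Finset.mem_singleton, Subsingleton.elim σ 1, iff_true]
    intro i j k l hij hjk hkl hl
    omega
  have hD : ¬ SumDec (1 : Equiv.Perm (Fin 1)) := by
    rintro ⟨j, hj, hjn, -⟩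
    omega
  have hp : peaks (1 : Equiv.Perm (Fin 1)) = 0 := by
    rw [peaks, Finset.card_eq_zero, Finset.filter_false_of_mem]
    rintro c - ⟨h0, h1, -⟩
    omega
  rw [indSum, if_neg one_ne_zero, hS, Finset.sum_filter, Finset.sum_singleton, hp]
  cases a <;> cases b <;> simp [hD, startsUp, endsUp]

end Weights

/-- Elimination for the system satisfied by the refined enumerators: `l₁, l₀` are the left
factors, `A, B` the right factors, and `S` the full enumerator. -/
lemma sep_system_elim {K : Type*} [CommRing K] [IsDomain K] {x s S l₁ l₀ A B : K}
    (h₁ : l₁ = x + l₀ * B + l₁ * B) (h₀ : l₀ = l₀ * A + l₁ * A)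
    (hA : A = x + l₀ * B + l₁ * A + (1 + s) * (l₀ * A + l₀ * A))
    (hB : B = l₁ * B + l₁ * B + (1 + s) * (l₁ * A + l₀ * B))
    (hS : S = x + 2 * (l₁ * A + l₀ * B + l₁ * B + l₀ * A))
    (hne : 1 - (l₁ + l₀) * (2 - 2 * A + 2 * (1 + s) * A) ≠ 0) :
    (S + x) * ((1 + S) ^ 2 + s * S ^ 2) = 2 * S * (1 + S) := by
  obtain ⟨u, hu⟩ : ∃ u, u = l₁ + l₀ := ⟨_, rfl⟩
  have e0 : l₀ = u * A := by rw [hu]; linear_combination h₀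
  have e1 : l₁ = x + u * B := by rw [hu]; linear_combination h₁
  have hx : u * (1 - A - B) = x := by linear_combination hu + e0 + e1
  have e1' : l₁ = u * (1 - A) := by linear_combination e1 - hx
  have hA' : A = x + u * A * B + u * (1 - A) * A + (1 + s) * (2 * u * A ^ 2) := by
    linear_combination hA + (B + 2 * (1 + s) * A) * e0 + A * e1'
  have hB' : B = 2 * u * (1 - A) * B + (1 + s) * (u * (1 - A) * A + u * A * B) := by
    linear_combination hB + (1 + s) * B * e0 + (2 * B + (1 + s) * A) * e1'
  have hZ : (1 - A) * B - (1 + s) * A ^ 2 = 0 := by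
    have : ((1 - A) * B - (1 + s) * A ^ 2) *
        (1 - (l₁ + l₀) * (2 - 2 * A + 2 * (1 + s) * A)) = 0 := by
      rw [← hu]
      linear_combination (1 - A) * hB' - (1 + s) * A * hA' + (1 + s) * A * hx
    exact (mul_eq_zero.mp this).resolve_right hne
  have hAu : A = u * (1 + s * A ^ 2) := by
    linear_combination hA' - hx - u * hZ
  have hSu : S = 2 * u - x := by
    linear_combination hS + 2 * (B + A) * e0 + 2 * (A + B) * e1' - 2 * hx
  have hSA : A * (1 + S) = S := by
    have : x * (1 - A) = 2 * u * (1 - A) - A := by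
      linear_combination -(1 - A) * hx + hAu - u * hZ
    linear_combination (A - 1) * hSu + this
  have hx2 : S + x = 2 * u := by linear_combination hSu
  rw [hx2]
  linear_combination -2 * (1 + S) ^ 2 * hAu +
    (2 * (1 + S) - 2 * u * s * (A * (1 + S) + S)) * hSA

section GeneratingFunction

open PowerSeries

variable {R : Type*} [CommRing R] (t : R)

lemma mk_decSum (a b : Bool) :
    PowerSeries.mk (decSum t a b) = mk (leftSum t a) * mk (rightSum t b) := by
  ext n
  simp [PowerSeries.coeff_mul, decSum_eq]

lemma mk_indSum (a b : Bool) :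
    PowerSeries.mk (indSum t a b) =
      mk (decSum t (!b) (!a)) + if a = true ∧ b = true then X else 0 := by
  ext n
  rw [map_add, coeff_mk, coeff_mk]
  rcases lt_or_ge n 2 with hn | hn
  · rw [decSum_of_lt_two t _ _ hn, zero_add]
    interval_cases n
    · rw [indSum, if_pos rfl]; split_ifs <;> simp
    · rw [indSum_one]; split_ifs <;> simp
  · rw [indSum_eq_decSum t a b hn]
    split_ifs
    · rw [coeff_X, if_neg (by omega), add_zero]
    · simp

lemma mk_leftSum (a : Bool) :
    PowerSeries.mk (leftSum t a) = mk (indSum t a true) + mk (indSum t a false) := by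
  ext n
  simp [leftSum_eq]

lemma mk_rightSum (b : Bool) :
    PowerSeries.mk (rightSum t b) = (mk (indSum t true b) + mk (decSum t true b)) +
      C t * (mk (indSum t false b) + mk (decSum t false b)) := by
  ext n
  simp only [map_add, coeff_mk, coeff_C_mul]
  rcases eq_or_ne n 0 with rfl | hn
  · simp [rightSum, indSum, decSum_of_lt_two]
  · exact rightSum_eq t b hn

/-- The enumerator of nonempty separable permutations by size and number of peaks. -/
noncomputable def peakSeries : PowerSeries R :=
  mk fun n => if n = 0 then 0 else ∑ σ ∈ SEP n, t ^ peaks σ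

lemma peakSeries_eq :
    peakSeries t = ((mk (indSum t true true) + mk (decSum t true true)) +
        (mk (indSum t true false) + mk (decSum t true false))) +
      ((mk (indSum t false true) + mk (decSum t false true)) +
        (mk (indSum t false false) + mk (decSum t false false))) := by
  ext n
  simp only [map_add, coeff_mk, peakSeries]
  rcases eq_or_ne n 0 with rfl | hn
  · simp [indSum, decSum_of_lt_two]
  · rw [if_neg hn, sum_SEP_eq t hn]

theorem peakSeries_cubic [IsDomain R] (s : R) :
    (peakSeries (1 + s) + X) * ((1 + peakSeries (1 + s)) ^ 2 + C s * peakSeries (1 + s) ^ 2) =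
      2 * peakSeries (1 + s) * (1 + peakSeries (1 + s)) := by
  have hP := mk_decSum (1 + s)
  have hI := mk_indSum (1 + s)
  have hL := mk_leftSum (1 + s)
  have hR := mk_rightSum (1 + s)
  have hS := peakSeries_eq (1 + s)
  have hI' := fun a b => (hI a b).trans (by rw [hP])
  have hC : C (1 + s) = 1 + (C s : PowerSeries R) := by simp
  have ht := hL true
  have hf := hL false
  have hRt := hR true
  have hRf := hR false
  simp only [hI', hP, Bool.not_true, Bool.not_false, and_self, if_true, if_false,
    Bool.false_eq_true, and_false, false_and, add_zero, hC] at ht hf hRt hRf hS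
  refine sep_system_elim (l₁ := mk (leftSum (1 + s) true)) (l₀ := mk (leftSum (1 + s) false))
    (A := mk (rightSum (1 + s) true)) (B := mk (rightSum (1 + s) false)) ?_ ?_ ?_ ?_ ?_ ?_
  · linear_combination ht
  · linear_combination hf
  · linear_combination hRt
  · linear_combination hRf
  · linear_combination hS
  · intro h
    have := congrArg constantCoeff h
    have h0 : ∀ a, constantCoeff (mk (leftSum (1 + s) a)) = 0 := fun a => by
      rw [← PowerSeries.coeff_zero_eq_constantCoeff_apply, coeff_mk, leftSum, if_pos rfl]
    simp [h0] at this

end GeneratingFunction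

section Moments

open PowerSeries

/-- The coefficient of `s ^ i` in a power series over `ℝ[s]`. -/
noncomputable def innerCoeff (i : ℕ) (F : PowerSeries (Polynomial ℝ)) : PowerSeries ℝ :=
  mk fun n => (coeff n F).coeff i

lemma innerCoeff_add (i : ℕ) (F G : PowerSeries (Polynomial ℝ)) :
    innerCoeff i (F + G) = innerCoeff i F + innerCoeff i G := by
  ext n; simp [innerCoeff]

lemma innerCoeff_mul (i : ℕ) (F G : PowerSeries (Polynomial ℝ)) :
    innerCoeff i (F * G) = ∑ p ∈ antidiagonal i, innerCoeff p.1 F * innerCoeff p.2 G := by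
  ext n
  simp only [innerCoeff, coeff_mk, coeff_mul, Polynomial.finsetSum_coeff, Polynomial.coeff_mul,
    map_sum]
  exact Finset.sum_comm

lemma innerCoeff_zero_mul (F G : PowerSeries (Polynomial ℝ)) :
    innerCoeff 0 (F * G) = innerCoeff 0 F * innerCoeff 0 G := by
  simp [innerCoeff_mul]

lemma innerCoeff_one_mul (F G : PowerSeries (Polynomial ℝ)) :
    innerCoeff 1 (F * G) =
      innerCoeff 0 F * innerCoeff 1 G + innerCoeff 1 F * innerCoeff 0 G := by
  simp [innerCoeff_mul, Finset.Nat.antidiagonal_succ]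

lemma innerCoeff_two_mul (F G : PowerSeries (Polynomial ℝ)) :
    innerCoeff 2 (F * G) =
      innerCoeff 0 F * innerCoeff 2 G + innerCoeff 1 F * innerCoeff 1 G +
        innerCoeff 2 F * innerCoeff 0 G := by
  simp [innerCoeff_mul, Finset.Nat.antidiagonal_succ, add_assoc]

lemma innerCoeff_X (i : ℕ) : innerCoeff i X = if i = 0 then X else 0 := by
  ext n
  simp only [innerCoeff, coeff_mk, coeff_X]
  split_ifs <;> simp_all [Polynomial.coeff_one, coeff_X]

lemma innerCoeff_one (i : ℕ) : innerCoeff i 1 = if i = 0 then 1 else 0 := by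
  ext n
  simp only [innerCoeff, coeff_mk, coeff_one]
  split_ifs <;> simp_all [Polynomial.coeff_one, coeff_one]

lemma innerCoeff_C (i : ℕ) : innerCoeff i (C Polynomial.X) = if i = 1 then 1 else 0 := by
  ext n
  simp only [innerCoeff, coeff_mk, coeff_C]
  split_ifs <;> simp_all [Polynomial.coeff_X, coeff_one, eq_comm]

/-- The generating function of the `i`-th binomial moments of the number of peaks. -/
noncomputable def momentSeries (i : ℕ) : PowerSeries ℝ :=
  mk fun n => if n = 0 then 0 else ∑ σ ∈ SEP n, ((peaks σ).choose i : ℝ)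

lemma innerCoeff_peakSeries (i : ℕ) :
    innerCoeff i (peakSeries (1 + Polynomial.X)) = momentSeries i := by
  ext n
  simp only [innerCoeff, coeff_mk, peakSeries, momentSeries]
  split_ifs
  · simp
  · simp [Polynomial.coeff_one_add_X_pow]

lemma constantCoeff_momentSeries (i : ℕ) : constantCoeff (momentSeries i) = 0 := by
  rw [← PowerSeries.coeff_zero_eq_constantCoeff_apply]
  simp [momentSeries]

lemma momentSeries_zero_eq :
    (momentSeries 0 + X) * (1 + momentSeries 0) = 2 * momentSeries 0 := by
  have h := congrArg (innerCoeff 0) (peakSeries_cubic (Polynomial.X : Polynomial ℝ))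
  rw [← one_add_one_eq_two (R := PowerSeries (Polynomial ℝ))] at h
  simp only [pow_two, innerCoeff_zero_mul, innerCoeff_add, innerCoeff_X, innerCoeff_one,
    innerCoeff_C, innerCoeff_peakSeries] at h
  simp only [if_true, zero_ne_one, if_false, zero_mul, add_zero] at h
  have hne : 1 + momentSeries 0 ≠ 0 := fun h => by
    simpa [constantCoeff_momentSeries] using congrArg constantCoeff h
  refine mul_right_cancel₀ hne ?_
  linear_combination h

lemma momentSeries_one_eq :
    (1 - 2 * momentSeries 0 - momentSeries 0 ^ 2) * momentSeries 1 =
      (momentSeries 0 + X) * momentSeries 0 ^ 2 := by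
  have h := congrArg (innerCoeff 1) (peakSeries_cubic (Polynomial.X : Polynomial ℝ))
  rw [← one_add_one_eq_two (R := PowerSeries (Polynomial ℝ))] at h
  simp only [pow_two, innerCoeff_zero_mul, innerCoeff_one_mul, innerCoeff_add, innerCoeff_X,
    innerCoeff_one, innerCoeff_C, innerCoeff_peakSeries] at h
  simp only [if_true, zero_ne_one, one_ne_zero, if_false, zero_mul, add_zero, zero_add,
    one_mul] at h
  linear_combination -h + 2 * momentSeries 1 * momentSeries_zero_eq

lemma momentSeries_two_eq :
    (1 - 2 * momentSeries 0 - momentSeries 0 ^ 2) * momentSeries 2 =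
      momentSeries 1 * (2 * (1 + momentSeries 0) * momentSeries 1 + momentSeries 0 ^ 2) +
      (momentSeries 0 + X) * (momentSeries 1 ^ 2 + 2 * momentSeries 0 * momentSeries 1) -
      2 * momentSeries 1 ^ 2 := by
  have h := congrArg (innerCoeff 2) (peakSeries_cubic (Polynomial.X : Polynomial ℝ))
  rw [← one_add_one_eq_two (R := PowerSeries (Polynomial ℝ))] at h
  simp only [pow_two, innerCoeff_zero_mul, innerCoeff_one_mul, innerCoeff_two_mul,
    innerCoeff_add, innerCoeff_X,
    innerCoeff_one, innerCoeff_C, innerCoeff_peakSeries] at h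
  simp only [if_true, zero_ne_one, one_ne_zero, if_false, zero_mul, add_zero, zero_add,
    one_mul, OfNat.ofNat_ne_zero, OfNat.ofNat_ne_one] at h
  linear_combination -h + 2 * momentSeries 2 * momentSeries_zero_eq

/-- The square root `√(1 - 6x + x²)`. -/
noncomputable def sqrtSeries : PowerSeries ℝ := 1 - X - 2 * momentSeries 0

lemma sqrtSeries_ne_zero : sqrtSeries ≠ 0 := fun h => by
  simpa [sqrtSeries, constantCoeff_momentSeries] using congrArg constantCoeff h

lemma sqrtSeries_mul_deriv :
    sqrtSeries * derivative ℝ (momentSeries 0) = 1 + momentSeries 0 := by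
  have h := congrArg (derivative ℝ) momentSeries_zero_eq
  simp only [Derivation.leibniz, map_add, smul_eq_mul, derivative_X,
    Derivation.map_one_eq_zero, ← one_add_one_eq_two (R := PowerSeries ℝ)] at h
  rw [sqrtSeries]
  linear_combination -h

lemma sqrtSeries_mul_deriv_deriv :
    sqrtSeries * derivative ℝ (derivative ℝ (momentSeries 0)) =
      2 * derivative ℝ (momentSeries 0) + 2 * derivative ℝ (momentSeries 0) ^ 2 := by
  have h := congrArg (derivative ℝ) sqrtSeries_mul_deriv
  rw [Derivation.leibniz] at h
  simp only [sqrtSeries, map_add, map_sub, Derivation.leibniz, smul_eq_mul, derivative_X,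
    Derivation.map_one_eq_zero, ← one_add_one_eq_two (R := PowerSeries ℝ)] at h ⊢
  linear_combination h

lemma momentSeries_ode :
    (1 - 6 * X + X ^ 2) * derivative ℝ (momentSeries 0) =
      1 + X + (X - 3) * momentSeries 0 := by
  have h := momentSeries_zero_eq
  have hd := sqrtSeries_mul_deriv
  rw [sqrtSeries] at hd
  linear_combination (1 - X - 2 * momentSeries 0) * hd +
    (-2 - 4 * derivative ℝ (momentSeries 0)) * h

end Moments

section ClosedForms

open PowerSeries

lemma moments_closed_form {K : Type*} [CommRing K] [IsDomain K] {x U V W y d e : K}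
    (hU : (U + x) * (1 + U) = 2 * U)
    (hV : (1 - 2 * U - U ^ 2) * V = (U + x) * U ^ 2)
    (hW : (1 - 2 * U - U ^ 2) * W = V * (2 * (1 + U) * V + U ^ 2) +
      (U + x) * (V ^ 2 + 2 * U * V) - 2 * V ^ 2)
    (hy : y = 1 - x - 2 * U) (hd : y * d = 1 + U) (he : y * e = 2 * d + 2 * d ^ 2)
    (hy0 : y ≠ 0) (hz0 : 1 + U ≠ 0) :
    4 * V = (x + x ^ 2) * d - (2 + x) * U + x ∧
    8 * W = 3 * U - 2 * x * d + 2 * x * (x * d + x ^ 2 * e) + x ^ 2 * U - x + x ^ 3 := by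
  have hyV : 2 * (y * V) = (U + x) ^ 2 * U := by
    refine mul_left_cancel₀ hz0 ?_
    subst hy
    linear_combination 2 * hV - 2 * V * hU - (U + x) * U * hU
  have hye : y ^ 3 * e = 2 * (y * (1 + U)) + 2 * (1 + U) ^ 2 := by
    linear_combination y ^ 2 * he + (2 * y + 2 * (y * d + (1 + U))) * hd
  have hyW : 4 * (y ^ 3 * (1 + U) * W) =
      (2 * (1 + U) + (U + x) - 2) * ((U + x) ^ 2 * U) ^ 2 +
        2 * (U ^ 2 + 2 * U * (U + x)) * ((U + x) ^ 2 * U) * y := by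
    have hyz : y * (1 + U) = (1 - 2 * U - U ^ 2) - ((U + x) * (1 + U) - 2 * U) := by
      rw [hy]; ring
    rw [hU, sub_self, sub_zero] at hyz
    linear_combination 4 * y ^ 2 * W * hyz + 4 * y ^ 2 * hW +
      ((2 * (1 + U) + (U + x) - 2) * (2 * (y * V) + (U + x) ^ 2 * U) +
        2 * (U ^ 2 + 2 * U * (U + x)) * y) * hyV
  refine ⟨mul_left_cancel₀ hy0 ?_, mul_left_cancel₀ (pow_ne_zero 3 hy0)
    (mul_left_cancel₀ hz0 ?_)⟩
  · have h1 : y * (4 * V) = 2 * ((U + x) ^ 2 * U) := by linear_combination 2 * hyV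
    have h2 : y * ((x + x ^ 2) * d - (2 + x) * U + x) =
        (x + x ^ 2) * (1 + U) + y * (x - (2 + x) * U) := by
      linear_combination (x + x ^ 2) * hd
    rw [h1, h2, hy]
    linear_combination (2 * U - 2) * hU
  · have h1 : (1 + U) * (y ^ 3 * (8 * W)) =
        2 * ((2 * (1 + U) + (U + x) - 2) * ((U + x) ^ 2 * U) ^ 2 +
        2 * (U ^ 2 + 2 * U * (U + x)) * ((U + x) ^ 2 * U) * y) := by
      linear_combination 2 * hyW
    have h2 : y ^ 3 * (3 * U - 2 * x * d + 2 * x * (x * d + x ^ 2 * e) + x ^ 2 * U - x + x ^ 3) =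
        3 * U * y ^ 3 - 2 * x * (y ^ 2 * (1 + U)) + 2 * x * (x * (y ^ 2 * (1 + U)) +
          x ^ 2 * (2 * (y * (1 + U)) + 2 * (1 + U) ^ 2)) + (x ^ 2 * U - x + x ^ 3) * y ^ 3 := by
      linear_combination (-2 * x * y ^ 2 + 2 * x ^ 2 * y ^ 2) * hd + 2 * x ^ 3 * hye
    rw [h1, h2, hy]
    linear_combination (3 - 9 * x + 4 * x ^ 3 - 3 * x ^ 4 + x ^ 5 - 12 * U + 12 * U * x +
      4 * U * x ^ 2 - 16 * U * x ^ 3 + 8 * U * x ^ 4 + 6 * U ^ 2 + 24 * U ^ 2 * x -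
      44 * U ^ 2 * x ^ 2 + 24 * U ^ 2 * x ^ 3 + 18 * U ^ 3 - 44 * U ^ 3 * x +
      32 * U ^ 3 * x ^ 2 - 18 * U ^ 4 + 20 * U ^ 4 * x + 6 * U ^ 5) * hU

lemma momentSeries_closed_form :
    4 * momentSeries 1 = (X + X ^ 2) * derivative ℝ (momentSeries 0) -
      (2 + X) * momentSeries 0 + X ∧
    8 * momentSeries 2 = 3 * momentSeries 0 - 2 * X * derivative ℝ (momentSeries 0) +
      2 * X * (X * derivative ℝ (momentSeries 0) +
        X ^ 2 * derivative ℝ (derivative ℝ (momentSeries 0))) +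
      X ^ 2 * momentSeries 0 - X + X ^ 3 :=
  moments_closed_form momentSeries_zero_eq momentSeries_one_eq momentSeries_two_eq rfl
    sqrtSeries_mul_deriv sqrtSeries_mul_deriv_deriv sqrtSeries_ne_zero fun h => by
      simpa [constantCoeff_momentSeries] using congrArg constantCoeff h

/-- The sum over separable permutations of the `i`-th binomial power of the number of peaks. -/
noncomputable def binomMoment (i n : ℕ) : ℝ := ∑ σ ∈ SEP n, ((peaks σ).choose i : ℝ)

lemma coeff_momentSeries (i : ℕ) {n : ℕ} (hn : n ≠ 0) :
    coeff n (momentSeries i) = binomMoment i n := by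
  simp [momentSeries, hn, binomMoment]

lemma coeff_momentSeries_succ (i n : ℕ) :
    coeff (n + 1) (momentSeries i) = binomMoment i (n + 1) :=
  coeff_momentSeries i n.succ_ne_zero

lemma binomMoment_zero_rec (n : ℕ) :
    (n + 4) * binomMoment 0 (n + 4) =
      (6 * n + 15) * binomMoment 0 (n + 3) - (n + 1) * binomMoment 0 (n + 2) := by
  have h : derivative ℝ (momentSeries 0) =
      C 6 * (X * derivative ℝ (momentSeries 0)) - X * (X * derivative ℝ (momentSeries 0)) + 1 + X +
      X * momentSeries 0 - C 3 * momentSeries 0 := by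
    have := momentSeries_ode
    have h6 : (C 6 : PowerSeries ℝ) = 6 := map_ofNat _ _
    have h3 : (C 3 : PowerSeries ℝ) = 3 := map_ofNat _ _
    rw [h6, h3]
    linear_combination this
  have := congrArg (coeff (n + 3)) h
  simp only [map_add, map_sub, coeff_C_mul, coeff_succ_X_mul, coeff_derivative, coeff_one, coeff_X,
    coeff_momentSeries_succ] at this
  simp at this
  linear_combination this

lemma binomMoment_one_eq (n : ℕ) :
    4 * binomMoment 1 (n + 2) = n * (binomMoment 0 (n + 2) + binomMoment 0 (n + 1)) := by
  have h : C 4 * momentSeries 1 = X * derivative ℝ (momentSeries 0) +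
      X * (X * derivative ℝ (momentSeries 0)) -
      C 2 * momentSeries 0 - X * momentSeries 0 + X := by
    have h4 : (C 4 : PowerSeries ℝ) = 4 := map_ofNat _ _
    have h2 : (C 2 : PowerSeries ℝ) = 2 := map_ofNat _ _
    rw [h4, h2]
    linear_combination momentSeries_closed_form.1
  have := congrArg (coeff (n + 2)) h
  simp only [map_add, map_sub, coeff_C_mul, coeff_succ_X_mul, coeff_derivative, coeff_X,
    coeff_momentSeries_succ] at this
  simp at this
  linear_combination this

lemma binomMoment_two_eq (n : ℕ) :
    8 * binomMoment 2 (n + 4) = -(2 * n + 5) * binomMoment 0 (n + 4) +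
      2 * (n + 3) ^ 2 * binomMoment 0 (n + 3) + binomMoment 0 (n + 2) := by
  have h : C 8 * momentSeries 2 = C 3 * momentSeries 0 -
      C 2 * (X * derivative ℝ (momentSeries 0)) +
      C 2 * (X * (X * derivative ℝ (momentSeries 0)) +
        X * (X * (X * derivative ℝ (derivative ℝ (momentSeries 0))))) +
      X * (X * momentSeries 0) - X + X ^ 3 := by
    have h8 : (C 8 : PowerSeries ℝ) = 8 := map_ofNat _ _
    have h2 : (C 2 : PowerSeries ℝ) = 2 := map_ofNat _ _
    have h3 : (C 3 : PowerSeries ℝ) = 3 := map_ofNat _ _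
    rw [h8, h2, h3]
    linear_combination momentSeries_closed_form.2
  have := congrArg (coeff (n + 4)) h
  simp only [map_add, map_sub, coeff_C_mul, coeff_succ_X_mul, coeff_derivative, coeff_X,
    coeff_X_pow, coeff_momentSeries_succ] at this
  simp at this
  linear_combination this

end ClosedForms

lemma binomMoment_nonneg (i n : ℕ) : 0 ≤ binomMoment i n := by
  unfold binomMoment; positivity

lemma momentSeries_zero_coeff_nonneg (n : ℕ) : 0 ≤ PowerSeries.coeff n (momentSeries 0) := by
  rcases eq_or_ne n 0 with rfl | hn
  · simp [constantCoeff_momentSeries]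
  · rw [coeff_momentSeries 0 hn]; exact binomMoment_nonneg 0 n

lemma momentSeries_zero_coeff_succ (n : ℕ) :
    (if n = 0 then 1 else 0) + PowerSeries.coeff n (momentSeries 0) ≤
      PowerSeries.coeff (n + 1) (momentSeries 0) := by
  have h : momentSeries 0 = PowerSeries.X + PowerSeries.X * momentSeries 0 +
      momentSeries 0 * momentSeries 0 := by
    linear_combination -momentSeries_zero_eq
  have hn := congrArg (PowerSeries.coeff (n + 1)) h
  simp only [map_add, PowerSeries.coeff_succ_X_mul, PowerSeries.coeff_X,
    Nat.add_eq_right] at hn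
  rw [hn, PowerSeries.coeff_mul, le_add_iff_nonneg_right]
  exact Finset.sum_nonneg fun p _ =>
    mul_nonneg (momentSeries_zero_coeff_nonneg _) (momentSeries_zero_coeff_nonneg _)

lemma binomMoment_zero_pos (n : ℕ) : 0 < binomMoment 0 (n + 1) := by
  rw [← coeff_momentSeries_succ]
  induction n with
  | zero =>
    have := momentSeries_zero_coeff_succ 0
    simp only [if_true, PowerSeries.coeff_zero_eq_constantCoeff, constantCoeff_momentSeries] at this
    linarith
  | succ n ih =>
    have := momentSeries_zero_coeff_succ (n + 1)
    simp only [n.succ_ne_zero, if_false] at this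
    linarith

/-- The ratio of the numbers of separable permutations of `n + 2` and of `n + 3` points. -/
noncomputable def sepRatio (n : ℕ) : ℝ := binomMoment 0 (n + 2) / binomMoment 0 (n + 3)

lemma sepRatio_nonneg (n : ℕ) : 0 ≤ sepRatio n :=
  div_nonneg (binomMoment_nonneg _ _) (binomMoment_nonneg _ _)

lemma sepRatio_le_one (n : ℕ) : sepRatio n ≤ 1 := by
  refine div_le_one_of_le₀ ?_ (binomMoment_nonneg _ _)
  have := momentSeries_zero_coeff_succ (n + 2)
  simpa [coeff_momentSeries] using this

lemma sepRatio_mul (n : ℕ) : binomMoment 0 (n + 2) = sepRatio n * binomMoment 0 (n + 3) :=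
  (div_mul_cancel₀ _ (binomMoment_zero_pos (n + 2)).ne').symm

lemma sepRatio_rec (n : ℕ) :
    sepRatio (n + 1) * ((6 * n + 15) - (n + 1) * sepRatio n) = n + 4 := by
  have h := binomMoment_zero_rec n
  have h1 := sepRatio_mul n
  have h2 : binomMoment 0 (n + 3) = sepRatio (n + 1) * binomMoment 0 (n + 4) := sepRatio_mul (n + 1)
  refine mul_right_cancel₀ (binomMoment_zero_pos (n + 3)).ne' ?_
  rw [h1, h2] at h
  linear_combination -h

/-- The radius of convergence of the generating function of separable permutations. -/
noncomputable def sepRadius : ℝ := 3 - 2 * √2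

lemma sepRadius_sq : sepRadius ^ 2 = 6 * sepRadius - 1 := by
  have := Real.sq_sqrt (show (0 : ℝ) ≤ 2 by norm_num)
  rw [sepRadius]
  linear_combination 4 * this

lemma sepRadius_bounds : 0.17 < sepRadius ∧ sepRadius < 0.172 := by
  have h1 : √2 < 1.415 := (Real.sqrt_lt' (by norm_num)).2 (by norm_num)
  have h2 : 1.414 < √2 := Real.lt_sqrt_of_sq_lt (by norm_num)
  rw [sepRadius]
  constructor <;> linarith

/-- The first order approximation of `sepRatio`. -/
noncomputable def approxRatio (n : ℕ) : ℝ := sepRadius + 3 * sepRadius / (2 * (n + 3))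

lemma approxRatio_bounds (n : ℕ) : 0 ≤ approxRatio n ∧ approxRatio n ≤ 1 := by
  obtain ⟨h1, h2⟩ := sepRadius_bounds
  have h3 : 0 ≤ 3 * sepRadius / (2 * (n + 3)) := by positivity
  have h4 : 3 * sepRadius / (2 * ((n : ℝ) + 3)) ≤ 3 * sepRadius / 6 :=
    div_le_div_of_nonneg_left (by linarith) (by norm_num) (by linarith [n.cast_nonneg (α := ℝ)])
  rw [approxRatio]
  constructor <;> linarith

lemma approxRatio_rec (n : ℕ) :
    |approxRatio (n + 1) * ((6 * n + 15) - (n + 1) * approxRatio n) - (n + 4)| ≤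
      9 / (4 * (n + 3)) := by
  have hn : (0 : ℝ) ≤ n := n.cast_nonneg
  have h : approxRatio (n + 1) * ((6 * n + 15) - (n + 1) * approxRatio n) - (n + 4) =
      ((72 * sepRadius - 21) * (n + 4) + 108 * sepRadius - 9) / (4 * (n + 4) * (n + 3)) := by
    rw [approxRatio, approxRatio]
    push_cast
    field_simp
    linear_combination (-16 * n ^ 4 - 240 * n ^ 3 - 1260 * n ^ 2 - 2620 * n - 1584) * sepRadius_sq
  obtain ⟨h1, h2⟩ := sepRadius_bounds
  rw [h, abs_div, abs_of_pos (show 0 < 4 * ((n : ℝ) + 4) * (n + 3) by positivity),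
    div_le_div_iff₀ (by positivity) (by positivity)]
  have : |(72 * sepRadius - 21) * (n + 4) + 108 * sepRadius - 9| ≤ 9 * (n + 4) := by
    rw [abs_le]
    constructor <;> nlinarith
  nlinarith [mul_le_mul_of_nonneg_right this (show 0 ≤ 4 * ((n : ℝ) + 3) by positivity)]

lemma abs_sepRatio_sub_le (n : ℕ) : |sepRatio n - approxRatio n| ≤ 9 / (n + 3) ^ 2 := by
  induction n with
  | zero =>
    have h1 := sepRatio_nonneg 0
    have h2 := sepRatio_le_one 0
    obtain ⟨h3, h4⟩ := approxRatio_bounds 0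
    norm_num
    rw [abs_le]
    constructor <;> linarith
  | succ n ih =>
    have hn : (0 : ℝ) ≤ n := n.cast_nonneg
    set D := (6 * n + 15 : ℝ) - (n + 1) * sepRatio n with hD
    have hDle : 5 * (n : ℝ) + 14 ≤ D := by
      nlinarith [sepRatio_le_one n, sepRatio_nonneg n]
    have hkey : (sepRatio (n + 1) - approxRatio (n + 1)) * D =
        approxRatio (n + 1) * (n + 1) * (sepRatio n - approxRatio n) -
          (approxRatio (n + 1) * ((6 * n + 15) - (n + 1) * approxRatio n) - (n + 4)) := by
      linear_combination sepRatio_rec n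
    have habs : |sepRatio (n + 1) - approxRatio (n + 1)| * D ≤
        (n + 1) * (9 / (n + 3) ^ 2) + 9 / (4 * (n + 3)) := by
      rw [← abs_of_pos (show 0 < D by linarith), ← abs_mul, hkey]
      refine (abs_sub _ _).trans (add_le_add ?_ (approxRatio_rec n))
      obtain ⟨h3, h4⟩ := approxRatio_bounds (n + 1)
      rw [abs_mul, abs_of_nonneg (by positivity)]
      refine mul_le_mul ?_ ih (abs_nonneg _) (by positivity)
      nlinarith
    have hmain : (n + 1) * (9 / ((n : ℝ) + 3) ^ 2) + 9 / (4 * (n + 3)) ≤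
        9 / (n + 4) ^ 2 * (5 * n + 14) := by
      rw [← sub_nonneg]
      have : 9 / ((n : ℝ) + 4) ^ 2 * (5 * n + 14) -
          ((n + 1) * (9 / ((n : ℝ) + 3) ^ 2) + 9 / (4 * (n + 3))) =
        9 * (4 * (5 * n + 14) * (n + 3) ^ 2 - 4 * (n + 1) * (n + 4) ^ 2 - (n + 4) ^ 2 * (n + 3)) /
          (4 * (n + 4) ^ 2 * (n + 3) ^ 2) := by
        field_simp
        ring
      rw [this]
      refine div_nonneg ?_ (by positivity)
      ring_nf
      positivity
    have hpos : 0 < 5 * (n : ℝ) + 14 := by linarith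
    refine le_of_mul_le_mul_right ?_ hpos
    refine (mul_le_mul_of_nonneg_left hDle (abs_nonneg _)).trans (habs.trans (hmain.trans_eq ?_))
    push_cast
    ring

lemma tendsto_mul_sepRatio_sub :
    Tendsto (fun n : ℕ => (n : ℝ) * (sepRatio n - sepRadius)) atTop (nhds (3 * sepRadius / 2)) := by
  have h0 : Tendsto (fun n : ℕ => ((n : ℝ) + 3)⁻¹) atTop (nhds 0) :=
    (tendsto_natCast_atTop_atTop.atTop_add tendsto_const_nhds).inv_tendsto_atTop
  have h1 : Tendsto (fun n : ℕ => (n : ℝ) * (sepRatio n - approxRatio n)) atTop (nhds 0) := by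
    refine squeeze_zero_norm (fun n => ?_) (by simpa using h0.const_mul 9)
    have hn : (0 : ℝ) ≤ n := n.cast_nonneg
    rw [norm_mul, Real.norm_eq_abs, Real.norm_eq_abs, abs_of_nonneg hn]
    refine (mul_le_mul_of_nonneg_left (abs_sepRatio_sub_le n) hn).trans ?_
    rw [← div_eq_mul_inv, ← mul_div_assoc, div_le_div_iff₀ (by positivity) (by positivity)]
    nlinarith
  have h2 : Tendsto (fun n : ℕ => 3 * sepRadius / 2 * (1 - 3 * ((n : ℝ) + 3)⁻¹)) atTop
      (nhds (3 * sepRadius / 2 * (1 - 3 * 0))) :=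
    ((h0.const_mul 3).const_sub 1).const_mul _
  have h3 := h1.add h2
  rw [show 0 + 3 * sepRadius / 2 * (1 - 3 * 0) = 3 * sepRadius / 2 by ring] at h3
  refine h3.congr fun n => ?_
  have : (n : ℝ) + 3 ≠ 0 := by positivity
  rw [approxRatio]
  field_simp
  ring

lemma tendsto_sepRatio : Tendsto sepRatio atTop (nhds sepRadius) := by
  have h := (tendsto_mul_sepRatio_sub.mul
    (tendsto_inv_atTop_nhds_zero_nat (𝕜 := ℝ))).add_const sepRadius
  rw [mul_zero, zero_add] at h
  refine h.congr' ?_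
  filter_upwards [eventually_gt_atTop 0] with n hn
  have : (n : ℝ) ≠ 0 := by positivity
  field_simp
  ring

lemma sepVar_eq_sub {n : ℕ} (hn : ((SEP n).card : ℝ) ≠ 0) (f : Equiv.Perm (Fin n) → ℝ) :
    sepVar n f = sepExp n (fun σ => f σ ^ 2) - sepExp n f ^ 2 := by
  set μ := sepExp n f with hμ
  have hsum : ∑ σ ∈ SEP n, f σ = μ * (SEP n).card := by
    rw [hμ, sepExp, div_mul_cancel₀ _ hn]
  have hexp : ∑ σ ∈ SEP n, (f σ - μ) ^ 2 =
      ∑ σ ∈ SEP n, f σ ^ 2 - μ ^ 2 * (SEP n).card := by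
    simp only [sub_sq, Finset.sum_add_distrib, Finset.sum_sub_distrib, mul_assoc,
      ← Finset.mul_sum, ← Finset.sum_mul, hsum, Finset.sum_const, nsmul_eq_mul]
    ring
  rw [sepVar, ← hμ, sepExp, sepExp, hexp]
  field_simp

lemma sepVar_eq_of_peaks {n : ℕ} {f : Equiv.Perm (Fin n) → ℝ}
    (hn : binomMoment 0 n ≠ 0) (hf : ∀ σ ∈ SEP n, f σ = 2 * peaks σ + 1) :
    sepVar n f = 4 * (2 * (binomMoment 2 n / binomMoment 0 n) +
      binomMoment 1 n / binomMoment 0 n - (binomMoment 1 n / binomMoment 0 n) ^ 2) := by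
  have h0 : binomMoment 0 n = (SEP n).card := by simp [binomMoment]
  have h1 : sepExp n f = (2 * binomMoment 1 n + binomMoment 0 n) / binomMoment 0 n := by
    rw [sepExp, Finset.sum_congr rfl hf, h0]
    simp [binomMoment, Finset.sum_add_distrib, Finset.mul_sum]
  have h2 : sepExp n (fun σ => f σ ^ 2) =
      (8 * binomMoment 2 n + 8 * binomMoment 1 n + binomMoment 0 n) / binomMoment 0 n := by
    rw [sepExp, ← h0]
    congr 1
    simp only [binomMoment, Finset.mul_sum, ← Finset.sum_add_distrib]
    refine Finset.sum_congr rfl fun σ hσ => ?_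
    rw [hf σ hσ, Nat.cast_choose_two, Nat.choose_one_right, Nat.choose_zero_right]
    push_cast
    ring
  rw [sepVar_eq_sub (h0 ▸ hn), h1, h2]
  field_simp
  ring

lemma sepVar_peaks_eq (n : ℕ) {f : Equiv.Perm (Fin (n + 4)) → ℝ}
    (hf : ∀ σ ∈ SEP (n + 4), f σ = 2 * peaks σ + 1) :
    sepVar (n + 4) f = (n + 2) * ((n + 2) * (sepRatio (n + 1) - sepRadius)) *
      ((6 - sepRadius - sepRatio (n + 1)) / 4) + (n + 2) * (5 * sepRatio (n + 1) - 1) +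
      (2 * sepRatio (n + 1) + sepRatio n * sepRatio (n + 1) - 1) := by
  have ha := (binomMoment_zero_pos (n + 3)).ne'
  have h1 : binomMoment 0 (n + 3) = sepRatio (n + 1) * binomMoment 0 (n + 4) := sepRatio_mul (n + 1)
  have h2 := sepRatio_mul n
  have h3 := binomMoment_two_eq n
  have h4 := binomMoment_one_eq (n + 2)
  rw [h2, h1] at h3
  rw [show n + 2 + 2 = n + 4 from rfl, show n + 2 + 1 = n + 3 from rfl, h1] at h4
  have h5 : binomMoment 2 (n + 4) / binomMoment 0 (n + 4) = (-(2 * n + 5) +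
      2 * (n + 3) ^ 2 * sepRatio (n + 1) + sepRatio n * sepRatio (n + 1)) / 8 := by
    rw [div_eq_iff ha]
    linear_combination h3 / 8
  have h6 : binomMoment 1 (n + 4) / binomMoment 0 (n + 4) =
      (n + 2) * (1 + sepRatio (n + 1)) / 4 := by
    rw [div_eq_iff ha]
    push_cast at h4
    linear_combination h4 / 4
  rw [sepVar_eq_of_peaks ha hf, h5, h6]
  linear_combination (-(n + 2) ^ 2 / 4 : ℝ) * sepRadius_sq

lemma tendsto_sepVar_div {f : ∀ n, Equiv.Perm (Fin n) → ℝ}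
    (hf : ∀ n, 1 ≤ n → ∀ σ ∈ SEP n, f n σ = 2 * peaks σ + 1) :
    Tendsto (fun n : ℕ => sepVar n (f n) / n) atTop (nhds ((16 - 11 * √2) / 2)) := by
  rw [← tendsto_add_atTop_iff_nat 4]
  have hinv : Tendsto (fun n : ℕ => ((n : ℝ) + 4)⁻¹) atTop (nhds 0) :=
    (tendsto_natCast_atTop_atTop.atTop_add tendsto_const_nhds).inv_tendsto_atTop
  have hfrac : Tendsto (fun n : ℕ => 1 - 2 * ((n : ℝ) + 4)⁻¹) atTop (nhds (1 - 2 * 0)) :=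
    (hinv.const_mul 2).const_sub 1
  have hq : Tendsto (fun n => sepRatio (n + 1)) atTop (nhds sepRadius) :=
    (tendsto_add_atTop_iff_nat 1).2 tendsto_sepRatio
  have hmul := ((tendsto_add_atTop_iff_nat 1).2 tendsto_mul_sepRatio_sub).add (hq.sub_const sepRadius)
  have hlim := ((hfrac.mul hmul).mul ((hq.const_sub (6 - sepRadius)).div_const 4)).add
    (hfrac.mul ((hq.const_mul 5).sub_const 1)) |>.add
    (hinv.mul (((hq.const_mul 2).add (tendsto_sepRatio.mul hq)).sub_const 1))
  have hval : (1 - 2 * 0) * (3 * sepRadius / 2 + (sepRadius - sepRadius)) *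
      ((6 - sepRadius - sepRadius) / 4) + (1 - 2 * 0) * (5 * sepRadius - 1) +
      0 * (2 * sepRadius + sepRadius * sepRadius - 1) = (16 - 11 * √2) / 2 := by
    have h : sepRadius = 3 - 2 * √2 := rfl
    linear_combination -3 / 4 * sepRadius_sq + 11 / 4 * h
  rw [hval] at hlim
  refine hlim.congr fun n => ?_
  rw [sepVar_peaks_eq n (hf (n + 4) (by omega))]
  have : (n : ℝ) + 4 ≠ 0 := by positivity
  push_cast
  field_simp
  ring

lemma sum_SEP_permCompl {n : ℕ} (f : Equiv.Perm (Fin n) → ℝ) :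
    ∑ σ ∈ SEP n, f (permCompl σ) = ∑ σ ∈ SEP n, f σ :=
  Finset.sum_nbij' permCompl permCompl (fun _ => permCompl_mem_SEP) (fun _ => permCompl_mem_SEP)
    (fun σ _ => permCompl_permCompl σ) (fun σ _ => permCompl_permCompl σ) fun _ _ => rfl

lemma sepExp_permCompl {n : ℕ} (f : Equiv.Perm (Fin n) → ℝ) :
    sepExp n (fun σ => f (permCompl σ)) = sepExp n f := by
  rw [sepExp, sum_SEP_permCompl, sepExp]

lemma sepVar_permCompl {n : ℕ} (f : Equiv.Perm (Fin n) → ℝ) :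
    sepVar n (fun σ => f (permCompl σ)) = sepVar n f := by
  rw [sepVar, sepExp_permCompl, sepExp_permCompl (fun σ => (f σ - sepExp n f) ^ 2), sepVar]

lemma exists_isPeak_between {g : ℕ → ℕ} {n a b c : ℕ}
    (hinj : ∀ i j, i < n → j < n → g i = g j → i = j) (hab : a < b) (hbc : b < c) (hc : c < n)
    (hga : g a < g b) (hgc : g c < g b) : ∃ d, a < d ∧ d < c ∧ IsPeak g n d := by
  obtain ⟨d, hd, hmax⟩ := (Finset.Icc a c).exists_max_image g ⟨b, by simp; omega⟩
  rw [Finset.mem_Icc] at hd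
  have hb := hmax b (by simp; omega)
  have had : a < d := lt_of_le_of_ne hd.1 fun h => by subst h; omega
  have hdc : d < c := lt_of_le_of_ne hd.2 fun h => by subst h; omega
  have hlt : ∀ e, e ≠ d → a ≤ e → e ≤ c → g e < g d := fun e he hae hec =>
    lt_of_le_of_ne (hmax e (by simp; omega)) fun h => he (hinj e d (by omega) (by omega) h)
  exact ⟨d, had, hdc, by omega, by omega, hlt _ (by omega) (by omega) (by omega),
    hlt _ (by omega) (by omega) (by omega)⟩

lemma le_peaks_of_alternating {n k : ℕ} (σ : Equiv.Perm (Fin n)) {p : ℕ → ℕ}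
    (hmono : ∀ i j, i < j → j ≤ 2 * k → p i < p j) (hlt : p (2 * k) < n)
    (hup : ∀ i < k, permVal σ (p (2 * i)) < permVal σ (p (2 * i + 1)))
    (hdown : ∀ i < k, permVal σ (p (2 * i + 2)) < permVal σ (p (2 * i + 1))) : k ≤ peaks σ := by
  have hle : ∀ i j, i ≤ j → j ≤ 2 * k → p i ≤ p j := fun i j hij hj =>
    hij.eq_or_lt.elim (fun h => h ▸ le_rfl) fun h => (hmono i j h hj).le
  have hex : ∀ i, ∃ d, i < k → p (2 * i) < d ∧ d < p (2 * i + 2) ∧ IsPeak (permVal σ) n d := by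
    intro i
    by_cases hi : i < k
    · have := hle (2 * i + 2) (2 * k) (by omega) le_rfl
      obtain ⟨d, hd⟩ := exists_isPeak_between (fun i j => permVal_inj σ)
        (hmono (2 * i) (2 * i + 1) (by omega) (by omega))
        (hmono (2 * i + 1) (2 * i + 2) (by omega) (by omega)) (by omega) (hup i hi) (hdown i hi)
      exact ⟨d, fun _ => hd⟩
    · exact ⟨0, fun h => absurd h hi⟩
  choose d hd using hex
  have hdmono : ∀ i j, i < j → j < k → d i < d j := fun i j hij hj =>
    (hd i (hij.trans hj)).2.1.trans_le
      ((hle (2 * i + 2) (2 * j) (by omega) (by omega)).trans (hd j hj).1.le)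
  rw [← Finset.card_range k]
  refine Finset.card_le_card_of_injOn d (fun i hi => ?_) fun i hi j hj hij => ?_
  · have := (hd i (by simpa using hi)).2.2
    simp only [Finset.mem_coe, Finset.mem_filter, Finset.mem_range]
    exact ⟨by have := this.2.1; omega, this⟩
  · simp only [Finset.mem_coe, Finset.mem_range] at hi hj
    by_contra hne
    rcases lt_or_gt_of_ne hne with h | h
    · have := hdmono i j h hj; omega
    · have := hdmono j i h hi; omega

lemma exists_alternating {g : ℕ → ℕ} (m : ℕ) (hne : ∀ i < m, g i ≠ g (i + 1)) :
    ∃ (p : ℕ → ℕ) (l : ℕ), p l = m ∧ (∀ i < l, p i < p (i + 1)) ∧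
      (∀ i < l, i % 2 = 0 → g (p i) < g (p (i + 1))) ∧
      (∀ i < l, i % 2 = 1 → g (p (i + 1)) < g (p i)) ∧
      (l = 2 * Nat.count (fun c => 0 < c ∧ g (c - 1) < g c ∧ g (c + 1) < g c) m ∧
          (0 < m → g m < g (m - 1)) ∨
        l = 2 * Nat.count (fun c => 0 < c ∧ g (c - 1) < g c ∧ g (c + 1) < g c) m + 1 ∧
          0 < m ∧ g (m - 1) < g m) := by
  induction m with
  | zero => exact ⟨fun _ => 0, 0, by simp⟩
  | succ m ih =>
    obtain ⟨p, l, hl, hp, hup, hdown, hcount⟩ := ih fun i hi => hne i (by omega)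
    have hm := hne m (by omega)
    have happ : ∀ i ≤ l, Function.update p (l + 1) (m + 1) i = p i := fun i hi =>
      Function.update_of_ne (by omega) _ _
    have hrep : ∀ i < l, Function.update p l (m + 1) i = p i := fun i hi =>
      Function.update_of_ne (by omega) _ _
    have append : ((l % 2 = 0 → g m < g (m + 1)) ∧ (l % 2 = 1 → g (m + 1) < g m)) →
        (∀ i < l + 1, Function.update p (l + 1) (m + 1) i <
          Function.update p (l + 1) (m + 1) (i + 1)) ∧
        (∀ i < l + 1, i % 2 = 0 → g (Function.update p (l + 1) (m + 1) i) <
          g (Function.update p (l + 1) (m + 1) (i + 1))) ∧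
        (∀ i < l + 1, i % 2 = 1 → g (Function.update p (l + 1) (m + 1) (i + 1)) <
          g (Function.update p (l + 1) (m + 1) i)) := by
      intro h
      rw [← forall₂_and, ← forall₂_and]
      intro i hi
      rcases eq_or_ne i l with rfl | hil
      · rw [happ i le_rfl, Function.update_self, hl]
        exact ⟨by omega, h⟩
      · rw [happ i (by omega), happ (i + 1) (by omega)]
        exact ⟨hp i (by omega), hup i (by omega), hdown i (by omega)⟩
    have replace : ((l % 2 = 1 → g m < g (m + 1)) ∧ (l % 2 = 0 → g (m + 1) < g m)) →
        (∀ i < l, Function.update p l (m + 1) i < Function.update p l (m + 1) (i + 1)) ∧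
        (∀ i < l, i % 2 = 0 → g (Function.update p l (m + 1) i) <
          g (Function.update p l (m + 1) (i + 1))) ∧
        (∀ i < l, i % 2 = 1 → g (Function.update p l (m + 1) (i + 1)) <
          g (Function.update p l (m + 1) i)) := by
      intro h
      rw [← forall₂_and, ← forall₂_and]
      intro i hi
      have h1 := hp i hi
      have h2 := hup i hi
      have h3 := hdown i hi
      rcases eq_or_ne (i + 1) l with hil | hil
      · rw [hil, hl] at h1 h2 h3
        rw [hrep i hi, hil, Function.update_self]
        exact ⟨by omega, fun hi => (h2 hi).trans (h.1 (by omega)),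
          fun hi => (h.2 (by omega)).trans (h3 hi)⟩
      · rw [hrep i hi, hrep (i + 1) (by omega)]
        exact ⟨h1, h2, h3⟩
    rw [Nat.count_succ]
    rcases lt_or_gt_of_ne hm with hlt | hlt
    · rw [if_neg (by omega)]
      rcases hcount with ⟨hc, -⟩ | ⟨hc, -⟩
      · obtain ⟨a, b, c⟩ := append ⟨fun _ => hlt, by omega⟩
        exact ⟨_, l + 1, Function.update_self .., a, b, c, Or.inr ⟨by omega, by omega, hlt⟩⟩
      · obtain ⟨a, b, c⟩ := replace ⟨fun _ => hlt, by omega⟩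
        exact ⟨_, l, Function.update_self .., a, b, c, Or.inr ⟨by omega, by omega, hlt⟩⟩
    · rcases hcount with ⟨hc, hd⟩ | ⟨hc, hm0, hd⟩
      · rw [if_neg (fun h => by have := hd h.1; omega)]
        obtain ⟨a, b, c⟩ := replace ⟨by omega, fun _ => hlt⟩
        exact ⟨_, l, Function.update_self .., a, b, c, Or.inl ⟨by omega, fun _ => hlt⟩⟩
      · rw [if_pos ⟨hm0, hd, hlt⟩]
        obtain ⟨a, b, c⟩ := append ⟨by omega, fun _ => hlt⟩
        exact ⟨_, l + 1, Function.update_self .., a, b, c, Or.inl ⟨by omega, fun _ => hlt⟩⟩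

lemma peaks_eq_count {n : ℕ} (σ : Equiv.Perm (Fin n)) :
    peaks σ = Nat.count (fun c => 0 < c ∧ permVal σ (c - 1) < permVal σ c ∧
      permVal σ (c + 1) < permVal σ c) (n - 1) := by
  rw [Nat.count_eq_card_filter_range, peaks]
  refine congrArg Finset.card (Finset.ext fun c => ?_)
  rw [Finset.mem_filter, Finset.mem_filter, Finset.mem_range, Finset.mem_range]
  unfold IsPeak
  constructor
  · rintro ⟨h, h1, h2, h3⟩
    exact ⟨by omega, h1, h3⟩
  · rintro ⟨h, h1, h3⟩
    exact ⟨by omega, h1, by omega, h3⟩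

lemma isAltSeq_iff {n : ℕ} {σ : Equiv.Perm (Fin n)} {l : List (Fin n)} :
    IsAltSeq σ true l ↔ ∀ j, ∀ hj : j + 1 < l.length,
      l[j] < l[j + 1] ∧ (j % 2 = 0 → σ l[j] < σ l[j + 1]) ∧
        (j % 2 = 1 → σ l[j + 1] < σ l[j]) := by
  refine (and_congr_left' List.isChain_iff_getElem).trans ?_
  rw [← forall₂_and]
  refine forall₂_congr fun j hj => and_congr_right fun _ => ?_
  simp only [List.get_eq_getElem, decide_eq_true_eq]
  rcases Nat.mod_two_eq_zero_or_one j with h | h <;> simp [h]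

lemma altTypeLen_true_false {n : ℕ} (hn : 1 ≤ n) (σ : Equiv.Perm (Fin n)) :
    altTypeLen σ true false = 2 * peaks σ + 1 := by
  refine IsGreatest.csSup_eq ⟨?_, ?_⟩
  · obtain ⟨p, l, hl, hp, hup, hdown, hcount⟩ := exists_alternating (g := permVal σ) (n - 1)
      fun i hi h => by have := permVal_inj σ (by omega) (by omega) h; omega
    rw [← peaks_eq_count] at hcount
    have hpl : ∀ i j, i + j = l → p i ≤ n - 1 := by
      intro i j
      induction j generalizing i with
      | zero => rintro rfl; exact hl.le
      | succ j ih =>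
        intro h
        exact (hp i (by omega)).le.trans (ih (i + 1) (by omega))
    have hpn : ∀ i ≤ l, p i < n := fun i hi => by
      have := hpl i (l - i) (by omega); omega
    refine ⟨List.ofFn fun i : Fin (2 * peaks σ + 1) => ⟨p i, hpn i (by omega)⟩, ?_, by simp,
      by simp⟩
    rw [isAltSeq_iff]
    intro j hj
    rw [List.length_ofFn] at hj
    have h2 := hup j (by omega)
    have h3 := hdown j (by omega)
    rw [permVal_of_lt σ (hpn j (by omega)), permVal_of_lt σ (hpn (j + 1) (by omega))] at h2 h3
    simp only [List.getElem_ofFn, Fin.lt_def]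
    exact ⟨hp j (by omega), h2, h3⟩
  · rintro k ⟨l, hl, rfl, hk⟩
    rw [if_neg (by simp)] at hk
    rw [isAltSeq_iff] at hl
    set p : ℕ → ℕ := fun i => if h : i < l.length then l[i] else 0 with hp
    have hpi : ∀ i (h : i < l.length), p i = l[i] := fun i h => dif_pos h
    have hmono : ∀ i j, i < j → j < l.length → p i < p j := by
      intro i j hij
      induction j, hij using Nat.le_induction with
      | base =>
        intro h
        rw [hpi _ h, hpi i (by omega)]
        exact (hl i h).1
      | succ j hij ih =>
        intro h
        refine (ih (by omega)).trans ?_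
        rw [hpi _ h, hpi j (by omega)]
        exact (hl j h).1
    have := le_peaks_of_alternating (k := l.length / 2) σ (p := p)
      (fun i j hij hj => hmono i j hij (by omega))
      (by rw [hpi _ (by omega)]; exact Fin.is_lt _)
      (fun i hi => by
        rw [hpi _ (by omega), hpi _ (by omega), permVal_coe, permVal_coe]
        exact (hl (2 * i) (by omega)).2.1 (by omega))
      (fun i hi => by
        rw [hpi _ (by omega), hpi _ (by omega), permVal_coe, permVal_coe]
        exact (hl (2 * i + 1) (by omega)).2.2 (by omega))
    omega

lemma isAltSeq_permCompl {n : ℕ} (σ : Equiv.Perm (Fin n)) (l : List (Fin n)) :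
    IsAltSeq (permCompl σ) true l ↔ IsAltSeq σ false l := by
  simp only [IsAltSeq, permCompl, Equiv.trans_apply, Fin.revPerm_apply, Fin.rev_lt_rev]
  refine and_congr_right fun _ => forall₂_congr fun j hj => ?_
  by_cases h : j % 2 = 0 <;> simp [h]

lemma altTypeLen_false_true {n : ℕ} (σ : Equiv.Perm (Fin n)) :
    altTypeLen σ false true = altTypeLen (permCompl σ) true false := by
  simp [altTypeLen, isAltSeq_permCompl]

/-- The variances of `Aₙ^{+,-}` and `Aₙ^{-,+}` are asymptotic to `((16 - 11√2)/2) n`. -/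
theorem var_altTypeLen_pm_asymp :
    Tendsto (fun n : ℕ =>
        sepVar n (fun σ => (altTypeLen σ true false : ℝ)) / n) atTop
      (nhds ((16 - 11 * Real.sqrt 2) / 2)) ∧
    Tendsto (fun n : ℕ =>
        sepVar n (fun σ => (altTypeLen σ false true : ℝ)) / n) atTop
      (nhds ((16 - 11 * Real.sqrt 2) / 2)) := by
  have h : Tendsto (fun n : ℕ => sepVar n (fun σ => (altTypeLen σ true false : ℝ)) / n) atTop
      (nhds ((16 - 11 * Real.sqrt 2) / 2)) :=
    tendsto_sepVar_div fun n hn σ _ => by rw [altTypeLen_true_false hn σ]; push_cast; rfl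
  refine ⟨h, h.congr fun n => ?_⟩
  simp only [altTypeLen_false_true]
  rw [sepVar_permCompl fun σ => (altTypeLen σ true false : ℝ)]
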